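/- arXiv:2602.04544 — 3 statements merged into one kernel-verified Lean document; each statement's English description precedes it below -/
import Mathlib

section
/- Let A be a finite-dimensional central simple algebra over ℂ and let σ : A → A be a ℂ-linear anti-involution, i.e. a ℂ-linear map with σ∘σ = id and σ(xy) = σ(y)σ(x) for all x, y ∈ A. If a ∈ A is invertible and σ(a) = a, then there exists b ∈ A with a = σ(b)·b. -/
/-!
An anti-multiplicative linear map that fixes the unit `a` fixes the commutative algebra `K[a]`
pointwise, so it suffices to find a square root `b` of `a` in `K[a]`: then `σ b * b = b ^ 2 = a`.
Interpolating square roots of the roots of the minimal polynomial of `a` gives an element of `K[a]`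
whose square differs from `a` by a nilpotent, and Newton's method corrects it to a square root,
because `a` and `2` are invertible.
-/

open Polynomial

theorem isNilpotent_aeval_of_forall_mem_roots_minpoly {K A : Type*} [Field K] [Ring A]
    [Algebra K A] {a : A} (ha : IsIntegral K a) (hsplits : (minpoly K a).Splits) {q : K[X]}
    (hq : ∀ z ∈ (minpoly K a).roots, q.IsRoot z) : IsNilpotent (aeval a q) := by
  have hdvd : minpoly K a ∣ q ^ (minpoly K a).roots.card := by
    calc minpoly K a = ((minpoly K a).roots.map fun z ↦ X - C z).prod :=
          hsplits.eq_prod_roots_of_monic (minpoly.monic ha)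
      _ ∣ ((minpoly K a).roots.map fun _ ↦ q).prod :=
          Multiset.prod_dvd_prod_of_dvd _ _ fun z hz ↦ dvd_iff_isRoot.2 (hq z hz)
      _ = q ^ (minpoly K a).roots.card := by simp
  exact ⟨_, by rw [← map_pow, minpoly.dvd_iff.1 hdvd]⟩

theorem exists_isNilpotent_aeval_pow_sub {K A : Type*} [Field K] [IsAlgClosed K] [Ring A]
    [Algebra K A] {a : A} (ha : IsIntegral K a) {n : ℕ} (hn : n ≠ 0) :
    ∃ p : K[X], IsNilpotent (aeval a p ^ n - a) := by
  classical
  choose root hroot using fun z : K ↦ IsAlgClosed.exists_pow_nat_eq z (Nat.pos_of_ne_zero hn)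
  let p : K[X] := Lagrange.interpolate (minpoly K a).roots.toFinset id root
  have hp : ∀ z ∈ (minpoly K a).roots, p.eval z = root z := fun z hz ↦
    Lagrange.eval_interpolate_at_node (v := id) root Function.injective_id.injOn
      (Multiset.mem_toFinset.2 hz)
  have hnil : IsNilpotent (aeval a (p ^ n - X)) :=
    isNilpotent_aeval_of_forall_mem_roots_minpoly ha (IsAlgClosed.splits _) fun z hz ↦ by
      simp [hp z hz, hroot]
  exact ⟨p, by rwa [map_sub, map_pow, aeval_X] at hnil⟩

theorem exists_pow_eq_of_isNilpotent_pow_sub {S : Type*} [CommRing S] {a x : S} {n : ℕ}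
    (hn : IsUnit (n : S)) (ha : IsUnit a) (hx : IsNilpotent (x ^ n - a)) :
    ∃ b : S, b ^ n = a := by
  obtain rfl | hn0 := eq_or_ne n 0
  · have hzero_one : (0 : S) = 1 := by simpa using hn
    exact ⟨1, eq_of_zero_eq_one hzero_one _ _⟩
  have hx_unit : IsUnit x := by
    have : IsUnit (x ^ n) := by
      simpa using hx.isUnit_add_left_of_commute ha (Commute.all _ _)
    exact (isUnit_pow_iff hn0).1 this
  obtain ⟨b, ⟨-, hb⟩, -⟩ := existsUnique_nilpotent_sub_and_aeval_eq_zero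
    (P := (X ^ n - C a : S[X])) (x := x) (by simpa using hx)
    (by simpa [derivative_X_pow] using hn.mul (hx_unit.pow (n - 1)))
  exact ⟨b, by simpa [sub_eq_zero] using hb⟩

theorem isUnit_of_isIntegral_of_isUnit_coe {R A : Type*} [CommRing R] [IsArtinianRing R] [Ring A]
    [Algebra R A] {S : Subalgebra R A} {x : S} (hx_int : IsIntegral R x) (hx : IsUnit (x : A)) :
    IsUnit x :=
  IsArtinianRing.isUnit_of_isIntegral_of_nonZeroDivisor hx_int <|
    mem_nonZeroDivisors_of_injective (f := S.val) Subtype.val_injective hx.mem_nonZeroDivisors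

open scoped IsMulCommutative in
theorem exists_mem_adjoin_pow_eq {K A : Type*} [Field K] [IsAlgClosed K] [Ring A] [Algebra K A]
    {a : A} (ha_int : IsIntegral K a) (ha : IsUnit a) {n : ℕ} (hn : (n : K) ≠ 0) :
    ∃ b ∈ Algebra.adjoin K {a}, b ^ n = a := by
  let a' : Algebra.adjoin K {a} := ⟨a, Algebra.self_mem_adjoin_singleton K a⟩
  have ha_int' : IsIntegral K a' :=
    (isIntegral_algHom_iff (Algebra.adjoin K {a}).val Subtype.val_injective).1 ha_int
  have ha' : IsUnit a' := isUnit_of_isIntegral_of_isUnit_coe ha_int' ha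
  have hn' : IsUnit (n : Algebra.adjoin K {a}) := by
    simpa using hn.isUnit.map (algebraMap K (Algebra.adjoin K {a}))
  obtain ⟨p, hp⟩ := exists_isNilpotent_aeval_pow_sub ha_int' (n := n) (by rintro rfl; simp at hn)
  obtain ⟨b, hb⟩ := exists_pow_eq_of_isNilpotent_pow_sub hn' ha' hp
  exact ⟨b, b.2, congrArg Subtype.val hb⟩

theorem map_eq_self_of_mem_adjoin_singleton {R A : Type*} [CommSemiring R] [Semiring A]
    [Algebra R A] {σ : A →ₗ[R] A} (hone : σ 1 = 1) (hanti : ∀ x y, σ (x * y) = σ y * σ x)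
    {a : A} (hfix : σ a = a) {x : A} (hx : x ∈ Algebra.adjoin R {a}) : σ x = x := by
  induction hx using Algebra.adjoin_induction with
  | mem x hx => rwa [Set.mem_singleton_iff.1 hx]
  | algebraMap r => rw [Algebra.algebraMap_eq_smul_one, map_smul, hone]
  | add x y _ _ hx hy => rw [map_add, hx, hy]
  | mul x y hx_mem hy_mem hx hy =>
    have hcomm : Commute y x := Algebra.commute_of_mem_adjoin_singleton_of_commute hx_mem
      (Algebra.commute_of_mem_adjoin_self hy_mem).symm
    rw [hanti, hx, hy, hcomm.eq]

theorem eq_antiInvolution_mul_self_of_fixed_general {K A : Type*} [Field K] [IsAlgClosed K]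
    (htwo : (2 : K) ≠ 0) [Ring A] [Algebra K A] (σ : A →ₗ[K] A)
    (hanti : ∀ x y, σ (x * y) = σ y * σ x) {a : A} (ha_int : IsIntegral K a) (ha : IsUnit a)
    (hfix : σ a = a) : ∃ b : A, a = σ b * b := by
  have hone : σ 1 = 1 := ha.mul_left_cancel <|
    calc a * σ 1 = σ (1 * a) := by rw [hanti, hfix]
      _ = a * 1 := by rw [one_mul, hfix, mul_one]
  obtain ⟨b, hb_mem, hb⟩ := exists_mem_adjoin_pow_eq ha_int ha (n := 2) (by exact_mod_cast htwo)
  have hσb : σ b = b := map_eq_self_of_mem_adjoin_singleton hone hanti hfix hb_mem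
  exact ⟨b, by rw [hσb, ← sq, hb]⟩

/-- Let `A` be a finite-dimensional central simple ℂ-algebra and `σ` a ℂ-linear
anti-involution of `A`. Every `σ`-fixed invertible element `a` is of the form
`a = σ(b)·b`. -/
theorem eq_antiInvolution_mul_self_of_fixed
    (A : Type*) [Ring A] [Algebra ℂ A] [FiniteDimensional ℂ A]
    [Algebra.IsCentral ℂ A] [IsSimpleRing A]
    (σ : A →ₗ[ℂ] A)
    (hinv : ∀ x, σ (σ x) = x)
    (hanti : ∀ x y, σ (x * y) = σ y * σ x)
    (a : A) (ha : IsUnit a) (hfix : σ a = a) :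
    ∃ b : A, a = σ b * b :=
  eq_antiInvolution_mul_self_of_fixed_general two_ne_zero σ hanti (.of_finite ℂ a) ha hfix
end

section
/- Let A be a finite-dimensional central simple algebra over ℝ and let σ be a ℂ-linear anti-involution of the complexification A_ℂ := ℂ ⊗_ℝ A (a ℂ-linear map with σ∘σ = id and σ(xy) = σ(y)σ(x)). Then there exists an ℝ-linear anti-involution σ' of A such that: (1) σ is equivalent to the ℂ-linear extension σ'_ℂ of σ', i.e. there is an invertible g ∈ A_ℂ with σ(x) = g⁻¹·σ'_ℂ(g x g⁻¹)·g for all x ∈ A_ℂ; and (2) every element x of A (viewed inside A_ℂ) that is invertible and satisfies σ(x)·x = 1 also satisfies σ'(x)·x = 1. -/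
open TensorProduct

/-!
The complexification `B` of `A` is a full matrix algebra over `ℂ`. Comparing `σ` with transposition
and the conjugation `τ` of `B` along `A` with entrywise conjugation yields, by Skolem–Noether, an
element `t` with `τ σ = t (σ τ) t⁻¹`, normalised so that `τ t * t = 1` and `σ t = t`. An explicit
Hilbert 90 argument writes `t = (τ y)⁻¹ y` with `y ∈ ℂ[t]`, and `y = g²` with `g ∈ ℂ[t]`. As `σ`
fixes `g`, the map `y σ(·) y⁻¹` is an anti-involution; it is equivalent to `σ` through `g`, and it
commutes with `τ`, so it descends to `A`. If `x ∈ A` and `σ x = x⁻¹`, then `τ` fixes both `x` and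
`σ x`, so `t`, and with it `g`, commutes with `σ x`: the twist does not change the value at `x`.
-/

section TensorProductSimple

variable {K B A : Type*} [Ring B] [Ring A]

section Coordinates

variable {ι : Type*} [DecidableEq ι] [CommRing K] [Algebra K B] [Algebra K A]

lemma equivFinsuppOfBasisLeft_one_tmul_mul (b : Module.Basis ι K B) (x : A) (z : B ⊗[K] A) (i : ι) :
    equivFinsuppOfBasisLeft b (1 ⊗ₜ x * z) i = x * equivFinsuppOfBasisLeft b z i := by
  induction z with
  | zero => simp
  | tmul c a => simp
  | add y z hy hz => simp [mul_add, hy, hz]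

lemma equivFinsuppOfBasisLeft_mul_one_tmul (b : Module.Basis ι K B) (x : A) (z : B ⊗[K] A) (i : ι) :
    equivFinsuppOfBasisLeft b (z * 1 ⊗ₜ x) i = equivFinsuppOfBasisLeft b z i * x := by
  induction z with
  | zero => simp
  | tmul c a => simp
  | add y z hy hz => simp [add_mul, hy, hz]

/-- The two-sided ideal of `A` formed by the `i`-th coordinates of those elements of `I` all of
whose coordinates outside `s` vanish. It serves to normalise one coordinate to `1` without
enlarging the support. -/
def coordIdeal (b : Module.Basis ι K B) (I : TwoSidedIdeal (B ⊗[K] A)) (s : Set ι) (i : ι) :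
    TwoSidedIdeal A :=
  .mk' {a | ∃ z ∈ I, (∀ j ∉ s, equivFinsuppOfBasisLeft b z j = 0) ∧
      equivFinsuppOfBasisLeft b z i = a}
    ⟨0, I.zero_mem, by simp⟩
    (by
      rintro _ _ ⟨y, hy, hys, rfl⟩ ⟨z, hz, hzs, rfl⟩
      exact ⟨y + z, I.add_mem hy hz, fun j hj => by simp [hys j hj, hzs j hj], by simp⟩)
    (by
      rintro _ ⟨z, hz, hzs, rfl⟩
      exact ⟨-z, I.neg_mem hz, fun j hj => by simp [hzs j hj], by simp⟩)
    (by
      rintro x _ ⟨z, hz, hzs, rfl⟩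
      exact ⟨1 ⊗ₜ x * z, I.mul_mem_left _ _ hz,
        fun j hj => by rw [equivFinsuppOfBasisLeft_one_tmul_mul, hzs j hj, mul_zero],
        equivFinsuppOfBasisLeft_one_tmul_mul b x z i⟩)
    (by
      rintro _ x ⟨z, hz, hzs, rfl⟩
      exact ⟨z * 1 ⊗ₜ x, I.mul_mem_right _ _ hz,
        fun j hj => by rw [equivFinsuppOfBasisLeft_mul_one_tmul, hzs j hj, zero_mul],
        equivFinsuppOfBasisLeft_mul_one_tmul b x z i⟩)

lemma exists_mem_coord_eq_one [IsSimpleRing A] (b : Module.Basis ι K B)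
    {I : TwoSidedIdeal (B ⊗[K] A)} {z : B ⊗[K] A} (hz : z ∈ I) {i : ι}
    (hi : equivFinsuppOfBasisLeft b z i ≠ 0) :
    ∃ w ∈ I, (equivFinsuppOfBasisLeft b w).support ⊆ (equivFinsuppOfBasisLeft b z).support ∧
      equivFinsuppOfBasisLeft b w i = 1 := by
  have mem_coordIdeal : equivFinsuppOfBasisLeft b z i ∈
      coordIdeal b I (equivFinsuppOfBasisLeft b z).support i := by
    rw [coordIdeal, TwoSidedIdeal.mem_mk']
    exact ⟨z, hz, by simp, rfl⟩
  have one_mem := IsSimpleRing.one_mem_of_ne_zero_mem _ hi mem_coordIdeal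
  rw [coordIdeal, TwoSidedIdeal.mem_mk'] at one_mem
  obtain ⟨w, hw, hsupp, hone⟩ := one_mem
  exact ⟨w, hw, fun j => by contrapose; simpa using hsupp j, hone⟩

lemma exists_tmul_one_of_forall_commute [Module.Free K B] [Algebra.IsCentral K A]
    {z : B ⊗[K] A} (hz : ∀ x : A, Commute (1 ⊗ₜ x) z) : ∃ c : B, z = c ⊗ₜ 1 := by
  classical
  let b := Module.Free.chooseBasis K B
  have coord_mem_center (i) : equivFinsuppOfBasisLeft b z i ∈ Subalgebra.center K A := by
    refine Subalgebra.mem_center_iff.mpr fun x => ?_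
    rw [← equivFinsuppOfBasisLeft_one_tmul_mul, (hz x).eq, equivFinsuppOfBasisLeft_mul_one_tmul]
  choose r hr using fun i => (Algebra.IsCentral.mem_center_iff K).mp (coord_mem_center i)
  refine ⟨(equivFinsuppOfBasisLeft b z).sum fun i _ => r i • b i, ?_⟩
  conv_lhs => rw [← (equivFinsuppOfBasisLeft b).symm_apply_apply z,
    equivFinsuppOfBasisLeft_symm_apply]
  simp only [Finsupp.sum, sum_tmul, hr, Algebra.algebraMap_eq_smul_one, smul_tmul]

end Coordinates

variable [Field K] [Algebra K B] [Algebra K A]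

/- A nonzero element of `I` with as few nonzero coordinates as possible, one of them equal to `1`,
commutes with `A`: its commutators with `A` lie in `I` and have fewer nonzero coordinates. -/
lemma exists_tmul_one_mem_of_ne_bot [Algebra.IsCentral K A] [IsSimpleRing A]
    {I : TwoSidedIdeal (B ⊗[K] A)} (hI : I ≠ ⊥) : ∃ c : B, c ≠ 0 ∧ c ⊗ₜ 1 ∈ I := by
  classical
  let b := Module.Basis.ofVectorSpace K B
  let coord := equivFinsuppOfBasisLeft (N := A) b
  obtain ⟨z₀, hz₀I, hz₀ : z₀ ≠ 0⟩ := SetLike.exists_of_lt (bot_lt_iff_ne_bot.mpr hI)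
  obtain ⟨z, ⟨hzI, hz⟩, hmin⟩ := exists_minimalFor_of_wellFoundedLT
    (fun z => z ∈ I ∧ z ≠ 0) (fun z => (coord z).support.card) ⟨z₀, hz₀I, hz₀⟩
  obtain ⟨i, hi⟩ := Finsupp.ne_iff.mp (coord.map_ne_zero_iff.mpr hz)
  obtain ⟨w, hwI, hsupp, hwi⟩ := exists_mem_coord_eq_one b hzI hi
  have commute_w (x : A) : Commute (1 ⊗ₜ x) w := by
    by_contra hx
    have hcoord (j) : coord (1 ⊗ₜ x * w - w * 1 ⊗ₜ x) j = x * coord w j - coord w j * x := by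
      simp [coord, equivFinsuppOfBasisLeft_one_tmul_mul, equivFinsuppOfBasisLeft_mul_one_tmul]
    have hlt : (coord (1 ⊗ₜ x * w - w * 1 ⊗ₜ x)).support.card < (coord z).support.card := by
      refine Finset.card_lt_card <| Finset.ssubset_iff_subset_ne.mpr
        ⟨fun j hj => hsupp ?_, fun h => ?_⟩
      · rw [Finsupp.mem_support_iff, hcoord] at hj
        exact Finsupp.mem_support_iff.mpr fun h => hj (by simp [coord, h])
      · have hmem := h ▸ Finsupp.mem_support_iff.mpr hi
        rw [Finsupp.mem_support_iff, hcoord] at hmem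
        exact hmem (by simp [coord, hwi])
    have hcI := I.sub_mem (I.mul_mem_left (1 ⊗ₜ x) _ hwI) (I.mul_mem_right _ (1 ⊗ₜ x) hwI)
    exact hlt.not_ge (hmin ⟨hcI, sub_ne_zero.mpr hx⟩ hlt.le)
  obtain ⟨c, rfl⟩ := exists_tmul_one_of_forall_commute commute_w
  refine ⟨c, ?_, hwI⟩
  rintro rfl
  simp at hwi

instance isSimpleRing_tensorProduct [IsSimpleRing B] [Algebra.IsCentral K A] [IsSimpleRing A] :
    IsSimpleRing (B ⊗[K] A) := by
  refine .of_eq_bot_or_eq_top fun I => or_iff_not_imp_left.mpr fun hI => ?_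
  obtain ⟨c, hc, hcI⟩ := exists_tmul_one_mem_of_ne_bot hI
  have one_mem := IsSimpleRing.one_mem_of_ne_zero_mem
    (I.comap (Algebra.TensorProduct.includeLeft : B →ₐ[K] B ⊗[K] A)) hc
    (by simpa [TwoSidedIdeal.mem_comap] using hcI)
  exact I.one_mem_iff.mp
    (by simpa [TwoSidedIdeal.mem_comap, Algebra.TensorProduct.one_def] using one_mem)

end TensorProductSimple

section SquareRoot

open Polynomial

variable {K B : Type*} [Field K] [Ring B] [Algebra K B]

lemma mem_spectrum_iff_isRoot_minpoly {a : B} (ha : IsIntegral K a) {μ : K} :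
    μ ∈ spectrum K a ↔ (minpoly K a).IsRoot μ := by
  nontriviality B
  refine ⟨fun hμ => ?_, fun hroot hunit => ?_⟩
  · simpa using spectrum.subset_polynomial_aeval a (minpoly K a) ⟨μ, hμ, rfl⟩
  · obtain ⟨q, hq⟩ := dvd_iff_isRoot.mpr hroot
    have hq0 : q ≠ 0 := by
      rintro rfl
      exact minpoly.ne_zero ha (by simpa using hq)
    have haq : (algebraMap K B μ - a) * aeval a q = 0 := by
      have := minpoly.aeval K a
      rw [hq, map_mul, map_sub, aeval_X, aeval_C] at this
      rw [← neg_sub, neg_mul, this, neg_zero]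
    have hdvd : (X - C μ) * q ∣ 1 * q := by
      rw [one_mul, ← hq]
      exact minpoly.dvd K a ((IsUnit.mul_right_eq_zero hunit).mp haq)
    exact not_isUnit_X_sub_C μ (isUnit_of_dvd_one ((mul_dvd_mul_iff_right hq0).mp hdvd))

lemma finite_spectrum_of_isIntegral {a : B} (ha : IsIntegral K a) : (spectrum K a).Finite := by
  nontriviality B
  refine (finite_setOfPred_isRoot (minpoly.ne_zero ha)).subset fun μ hμ => ?_
  exact (mem_spectrum_iff_isRoot_minpoly ha).mp hμ

lemma exists_prod_X_sub_C_dvd_sq_sub_X [IsAlgClosed K] [NeZero (2 : K)] (s : Multiset K)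
    (hs : 0 ∉ s) : ∃ p : K[X], (s.map fun a => X - C a).prod ∣ p ^ 2 - X := by
  induction s using Multiset.induction_on with
  | empty => exact ⟨0, by simp⟩
  | cons a s ih =>
    rw [Multiset.mem_cons, not_or] at hs
    obtain ⟨p, q, hq⟩ := ih hs.2
    set m := (s.map fun a => X - C a).prod
    have hqa : p.eval a ^ 2 - a = m.eval a * q.eval a := by simpa using congrArg (eval a) hq
    -- `p + r m` is still a root of `T² - X` modulo `m`; its defect `q + 2 p r + m r²` over `m`
    -- vanishes at `a` for some `r` because, as a quadratic in `r`, it has discriminant `4 a ≠ 0`.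
    obtain ⟨r, hr⟩ : ∃ r : K, m.eval a * (r * r) + 2 * p.eval a * r + q.eval a = 0 := by
      by_cases hm : m.eval a = 0
      · have hp : p.eval a ≠ 0 := fun hp => hs.1 (by simpa [hp, hm, eq_comm] using hqa)
        exact ⟨-q.eval a / (2 * p.eval a), by rw [hm]; field_simp [two_ne_zero (α := K)]; ring⟩
      · obtain ⟨d, hd⟩ := IsAlgClosed.exists_eq_mul_self a
        refine exists_quadratic_eq_zero hm ⟨2 * d, ?_⟩
        rw [discrim]
        linear_combination 4 * hqa + 4 * hd
    obtain ⟨e, he⟩ : X - C a ∣ m * (C r * C r) + 2 * p * C r + q :=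
      dvd_iff_isRoot.mpr (by simpa using hr)
    refine ⟨p + m * C r, e, ?_⟩
    rw [Multiset.map_cons, Multiset.prod_cons]
    linear_combination hq + m * he

lemma exists_mem_adjoin_mul_self_eq [IsAlgClosed K] [NeZero (2 : K)] [FiniteDimensional K B]
    (y : Bˣ) : ∃ g : Bˣ, (g : B) ∈ Algebra.adjoin K {(y : B)} ∧ g * g = y := by
  have hy := Algebra.IsIntegral.isIntegral (R := K) (y : B)
  have hroots : 0 ∉ (minpoly K (y : B)).roots := fun h =>
    spectrum.zero_notMem K y.isUnit
      ((mem_spectrum_iff_isRoot_minpoly hy).mpr (isRoot_of_mem_roots h))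
  obtain ⟨p, hp⟩ := exists_prod_X_sub_C_dvd_sq_sub_X _ hroots
  rw [← (IsAlgClosed.splits _).eq_prod_roots_of_monic (minpoly.monic hy), minpoly.dvd_iff, map_sub,
    map_pow, aeval_X, sub_eq_zero] at hp
  obtain ⟨g, hg⟩ : IsUnit (aeval (y : B) p) :=
    (isUnit_pow_iff two_ne_zero).mp (by rw [hp]; exact y.isUnit)
  exact ⟨g, hg ▸ aeval_mem_adjoin_singleton K _, Units.ext (by rw [Units.val_mul, hg, ← sq, hp])⟩

end SquareRoot

section Involutions

/-- `σ` is an anti-involution of `B`: an `R`-linear involution reversing products. -/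
structure IsAntiInvolution {R B : Type*} [CommSemiring R] [Semiring B] [Module R B]
    (σ : B →ₗ[R] B) : Prop where
  involutive : Function.Involutive σ
  map_mul_rev : ∀ x y, σ (x * y) = σ y * σ x

/-- `τ` is a conjugation of the `K`-algebra `B`: a multiplicative involution, semilinear with
respect to the star of `K`. For `K = ℂ` its fixed points are a real form of `B`. -/
structure IsConjugation {K B : Type*} [CommSemiring K] [StarRing K] [Semiring B] [Module K B]
    (τ : B →ₛₗ[starRingEnd K] B) : Prop where
  involutive : Function.Involutive τ
  map_mul : ∀ x y, τ (x * y) = τ x * τ y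

variable {K B : Type*} [CommSemiring K] [Semiring B] [Algebra K B]

namespace IsAntiInvolution

variable {σ T : B →ₗ[K] B}

lemma map_one (hσ : IsAntiInvolution σ) : σ 1 = 1 := by
  simpa [hσ.involutive 1] using (hσ.map_mul_rev 1 (σ 1)).symm

lemma map_eq_of_mem_adjoin (hσ : IsAntiInvolution σ) {t z : B} (ht : σ t = t)
    (hz : z ∈ Algebra.adjoin K {t}) : σ z = z := by
  induction hz using Algebra.adjoin_induction with
  | mem x hx => rw [Set.mem_singleton_iff.mp hx, ht]
  | algebraMap r => rw [Algebra.algebraMap_eq_smul_one, map_smul, hσ.map_one]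
  | add x y _ _ hx hy => rw [map_add, hx, hy]
  | mul x y hx hy ihx ihy =>
    rw [hσ.map_mul_rev, ihx, ihy]
    exact Algebra.commute_of_mem_adjoin_singleton_of_commute hx
      (Algebra.commute_of_mem_adjoin_self hy).symm

lemma map_units_inv_of_map_eq_smul (hT : IsAntiInvolution T) {s : Bˣ} {l : K} (hl : l * l = 1)
    (hTs : T s = l • (s : B)) : T ↑s⁻¹ = l • (↑s⁻¹ : B) := by
  have hmul : l • (T ↑s⁻¹ * s) = 1 := by
    rw [← mul_smul_comm, ← hTs, ← hT.map_mul_rev, Units.mul_inv, hT.map_one]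
  calc T ↑s⁻¹ = (l * l) • (T ↑s⁻¹ * s) * ↑s⁻¹ := by rw [hl, one_smul, Units.mul_inv_cancel_right]
    _ = l • (↑s⁻¹ : B) := by rw [mul_smul, hmul, smul_one_mul]

/-- The composite of two anti-involutions, as an automorphism. -/
def compAlgEquiv (hσ : IsAntiInvolution σ) (hT : IsAntiInvolution T) : B ≃ₐ[K] B :=
  .ofLinearEquiv
    ((LinearEquiv.ofInvolutive T hT.involutive).trans (.ofInvolutive σ hσ.involutive))
    (by simp [hσ.map_one, hT.map_one]) (by simp [hσ.map_mul_rev, hT.map_mul_rev])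

@[simp]
lemma compAlgEquiv_apply (hσ : IsAntiInvolution σ) (hT : IsAntiInvolution T) (x : B) :
    hσ.compAlgEquiv hT x = σ (T x) := rfl

end IsAntiInvolution

namespace IsConjugation

variable [StarRing K] {τ bar : B →ₛₗ[starRingEnd K] B}

lemma map_one (hτ : IsConjugation τ) : τ 1 = 1 := by
  simpa [hτ.involutive 1] using (hτ.map_mul 1 (τ 1)).symm

/-- The composite of two conjugations, as a (linear) automorphism. -/
def compAlgEquiv (hτ : IsConjugation τ) (hbar : IsConjugation bar) : B ≃ₐ[K] B :=
  .ofLinearEquiv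
    ((LinearEquiv.ofInvolutive bar hbar.involutive).trans (.ofInvolutive τ hτ.involutive))
    (by simp [hτ.map_one, hbar.map_one]) (by simp [hτ.map_mul, hbar.map_mul])

@[simp]
lemma compAlgEquiv_apply (hτ : IsConjugation τ) (hbar : IsConjugation bar) (x : B) :
    hτ.compAlgEquiv hbar x = τ (bar x) := rfl

end IsConjugation

end Involutions

section InnerAutomorphisms

/-- Every automorphism `f` of the `K`-algebra `B` is inner, `f x = u x u⁻¹`: the conclusion of the
Skolem–Noether theorem. -/
def AllAutInner (K B : Type*) [CommSemiring K] [Semiring B] [Algebra K B] : Prop :=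
  ∀ f : B ≃ₐ[K] B, ∃ u : Bˣ, ∀ x, f x * u = u * x

lemma allAutInner_end (K V : Type*) [Field K] [AddCommGroup V] [Module K V] :
    AllAutInner K (Module.End K V) := fun f => by
  obtain ⟨u, rfl⟩ := Module.End.mulSemiringActionToAlgEquiv_conjAct_surjective (K := K) (V := V) f
  exact ⟨ConjAct.ofConjAct u, fun x => by simp [ConjAct.units_smul_def, mul_assoc]⟩

lemma AllAutInner.of_algEquiv {K B C : Type*} [CommSemiring K] [Semiring B] [Semiring C]
    [Algebra K B] [Algebra K C] (hC : AllAutInner K C) (e : B ≃ₐ[K] C) : AllAutInner K B := by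
  intro f
  obtain ⟨u, hu⟩ := hC ((e.symm.trans f).trans e)
  refine ⟨Units.map e.symm u, fun x => e.injective ?_⟩
  simpa using hu (e x)

variable {K B : Type*} [CommSemiring K] [Semiring B] [Algebra K B]

lemma IsAntiInvolution.exists_unit_intertwining {σ T : B →ₗ[K] B} (hσ : IsAntiInvolution σ)
    (hT : IsAntiInvolution T) (hinner : AllAutInner K B) : ∃ s : Bˣ, ∀ x, s * σ x = T x * s := by
  obtain ⟨s, hs⟩ := hinner (hT.compAlgEquiv hσ)
  exact ⟨s, fun x => by simpa [hσ.involutive x] using (hs (σ x)).symm⟩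

lemma IsConjugation.exists_unit_intertwining [StarRing K] {τ bar : B →ₛₗ[starRingEnd K] B}
    (hτ : IsConjugation τ) (hbar : IsConjugation bar) (hinner : AllAutInner K B) :
    ∃ J : Bˣ, ∀ x, τ x * J = J * bar x := by
  obtain ⟨J, hJ⟩ := hinner (hτ.compAlgEquiv hbar)
  exact ⟨J, fun x => by simpa [hbar.involutive x] using hJ (bar x)⟩

end InnerAutomorphisms

section TwistingCocycle

/-- `t` is a unitary element for the conjugation `τ`, symmetric for the anti-involution `σ`, which
measures the failure of `σ` and `τ` to commute: `τ ∘ σ = t (σ ∘ τ) t⁻¹`. -/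
structure IsTwistingCocycle {K B : Type*} [CommSemiring K] [StarRing K] [Semiring B] [Module K B]
    (σ : B →ₗ[K] B) (τ : B →ₛₗ[starRingEnd K] B) (t : B) : Prop where
  map_mul_self : τ t * t = 1
  map_eq : σ t = t
  intertwines : ∀ x, τ (σ x) * t = t * σ (τ x)

section ReferencePair

variable {K B : Type*} [CommSemiring K] [StarRing K] [Semiring B] [Algebra K B]
  {σ T : B →ₗ[K] B} {τ bar : B →ₛₗ[starRingEnd K] B} {s J : Bˣ}

/-- For `σ = s⁻¹ T s` and `τ = J bar J⁻¹` with `T` and `bar` commuting, a scalar multiple of this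
element is a twisting cocycle. -/
def twistingElement (T : B →ₗ[K] B) (bar : B →ₛₗ[starRingEnd K] B) (s J : Bˣ) : B :=
  J * (bar ↑s⁻¹ * T J * s)

lemma map_twistingElement_mul_self (hT : IsAntiInvolution T) (hbar : IsConjugation bar)
    (hcomm : ∀ x, T (bar x) = bar (T x)) (hJ : ∀ x, τ x * J = J * bar x) {c : K}
    (hc : J * bar J = c • (1 : B)) :
    τ (twistingElement T bar s J) * twistingElement T bar s J = (c * c) • 1 := by
  have hbars : bar s * bar ↑s⁻¹ = 1 := by rw [← hbar.map_mul, Units.mul_inv, hbar.map_one]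
  have hTJ : bar (T J) * T J = c • 1 := by rw [← hcomm, ← hT.map_mul_rev, hc, map_smul, hT.map_one]
  have hmul : bar (bar ↑s⁻¹ * T J * s) * (bar ↑s⁻¹ * T J * s) = c • 1 :=
    calc bar (bar ↑s⁻¹ * T J * s) * (bar ↑s⁻¹ * T J * s)
        = ↑s⁻¹ * bar (T J) * (bar s * bar ↑s⁻¹) * T J * s := by
          simp only [hbar.map_mul, hbar.involutive _, mul_assoc]
      _ = ↑s⁻¹ * (bar (T J) * T J) * s := by simp only [hbars, mul_one, mul_assoc]
      _ = c • 1 := by rw [hTJ, mul_smul_one, smul_mul_assoc, Units.inv_mul]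
  calc τ (twistingElement T bar s J) * twistingElement T bar s J
      = J * bar J * (bar (bar ↑s⁻¹ * T J * s) * (bar ↑s⁻¹ * T J * s)) := by
        simp only [twistingElement, ← mul_assoc, hJ, hbar.map_mul]
    _ = (c * c) • 1 := by rw [hmul, hc, smul_mul_smul_comm, one_mul]

lemma twistingElement_intertwines (hT : IsAntiInvolution T) (hbar : IsConjugation bar)
    (hcomm : ∀ x, T (bar x) = bar (T x)) (hs : ∀ x, s * σ x = T x * s)
    (hJ : ∀ x, τ x * J = J * bar x) (x : B) :
    τ (σ x) * twistingElement T bar s J = twistingElement T bar s J * σ (τ x) := by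
  have hsinv : σ x * ↑s⁻¹ = ↑s⁻¹ * T x := by
    rw [Units.mul_inv_eq_iff_eq_mul, mul_assoc, ← hs, Units.inv_mul_cancel_left]
  calc τ (σ x) * twistingElement T bar s J
      = J * bar (σ x * ↑s⁻¹) * T J * s := by
        simp only [twistingElement, ← mul_assoc, hJ, hbar.map_mul]
    _ = J * bar ↑s⁻¹ * T (J * bar x) * s := by
        simp only [hsinv, hbar.map_mul, hT.map_mul_rev, hcomm, mul_assoc]
    _ = twistingElement T bar s J * σ (τ x) := by
        simp only [twistingElement, ← hJ x, hT.map_mul_rev, mul_assoc, hs]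

end ReferencePair

variable {K B : Type*} [Field K] [Ring B] [Algebra K B]

namespace IsAntiInvolution

variable {σ T : B →ₗ[K] B}

lemma exists_map_eq_smul [Algebra.IsCentral K B] [Nontrivial B] (hσ : IsAntiInvolution σ)
    (hT : IsAntiInvolution T) {s : Bˣ} (hs : ∀ x, s * σ x = T x * s) :
    ∃ l : K, l * l = 1 ∧ T s = l • (s : B) := by
  have hcomm (x) : x * (↑s⁻¹ * T s) = ↑s⁻¹ * T s * x := by
    have hTσ : T (σ x) = s * x * ↑s⁻¹ := by
      rw [Units.eq_mul_inv_iff_mul_eq, ← hs, hσ.involutive]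
    have := congrArg T (hs x)
    rw [hT.map_mul_rev, hT.map_mul_rev, hT.involutive, hTσ, mul_assoc, mul_assoc] at this
    rw [mul_assoc, ← this, Units.inv_mul_cancel_left]
  obtain ⟨l, hl⟩ := (Algebra.IsCentral.mem_center_iff K).mp (Subalgebra.mem_center_iff.mpr hcomm)
  have hTs : T s = l • (s : B) := by
    rw [Algebra.smul_def, Algebra.commutes, ← hl, Units.mul_inv_cancel_left]
  refine ⟨l, smul_left_injective K s.ne_zero ?_, hTs⟩
  simpa [hTs, smul_smul] using hT.involutive (s : B)

end IsAntiInvolution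

namespace IsConjugation

variable [StarRing K] {τ bar : B →ₛₗ[starRingEnd K] B}

lemma exists_mul_map_eq_smul [Algebra.IsCentral K B] [Nontrivial B] (hτ : IsConjugation τ)
    (hbar : IsConjugation bar) {J : Bˣ} (hJ : ∀ x, τ x * J = J * bar x) :
    ∃ c : K, c ≠ 0 ∧ starRingEnd K c = c ∧ J * bar J = c • (1 : B) := by
  have hcomm (x) : x * (J * bar J) = J * bar J * x := by
    calc x * (J * bar J) = τ (τ x) * J * bar J := by rw [hτ.involutive, mul_assoc]
      _ = J * bar (τ x * J) := by rw [hJ, mul_assoc, hbar.map_mul]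
      _ = J * bar J * x := by rw [hJ, hbar.map_mul, hbar.involutive, mul_assoc]
  obtain ⟨c, hc⟩ := (Algebra.IsCentral.mem_center_iff K).mp (Subalgebra.mem_center_iff.mpr hcomm)
  rw [Algebra.algebraMap_eq_smul_one] at hc
  have hbarJ : bar J * J = c • 1 := by
    rw [← Units.mul_right_inj J, ← mul_assoc, hc, smul_one_mul, mul_smul_one]
  have hc0 : c ≠ 0 := by
    rintro rfl
    have : bar J = 0 := by simpa using hc
    simpa [this, hbar.map_one] using hbar.map_mul J ↑J⁻¹
  refine ⟨c, hc0, smul_left_injective K (one_ne_zero (α := B)) ?_, hc⟩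
  simpa [hbar.map_mul, hbar.involutive _, hbar.map_one, hbarJ] using (congrArg bar hc).symm

end IsConjugation

variable [StarRing K] {σ T : B →ₗ[K] B} {τ bar : B →ₛₗ[starRingEnd K] B} {s J : Bˣ}

lemma map_twistingElement (hT : IsAntiInvolution T) (hcomm : ∀ x, T (bar x) = bar (T x))
    (hs : ∀ x, s * σ x = T x * s) {l : K} (hl : l * l = 1) (hTs : T s = l • (s : B)) :
    σ (twistingElement T bar s J) = twistingElement T bar s J := by
  have hlstar : starRingEnd K l = l := by
    rcases mul_self_eq_one_iff.mp hl with rfl | rfl <;> simp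
  rw [← Units.mul_right_inj s, hs, twistingElement]
  calc T (J * (bar ↑s⁻¹ * T J * s)) * s
      = T s * J * bar (T ↑s⁻¹) * T J * s := by
        simp only [hT.map_mul_rev, hT.involutive _, hcomm, mul_assoc]
    _ = (l * l) • (s * J * bar ↑s⁻¹ * T J * s) := by
        simp [hT.map_units_inv_of_map_eq_smul hl hTs, hTs, hlstar, mul_smul]
    _ = s * (J * (bar ↑s⁻¹ * T J * s)) := by simp only [hl, one_smul, mul_assoc]

theorem exists_isTwistingCocycle [Algebra.IsCentral K B] [Nontrivial B]
    (hinner : AllAutInner K B) (hT : IsAntiInvolution T) (hbar : IsConjugation bar)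
    (hcomm : ∀ x, T (bar x) = bar (T x)) (hσ : IsAntiInvolution σ) (hτ : IsConjugation τ) :
    ∃ t, IsTwistingCocycle σ τ t := by
  obtain ⟨s, hs⟩ := hσ.exists_unit_intertwining hT hinner
  obtain ⟨l, hl, hTs⟩ := hσ.exists_map_eq_smul hT hs
  obtain ⟨J, hJ⟩ := hτ.exists_unit_intertwining hbar hinner
  obtain ⟨c, hc0, hcstar, hc⟩ := hτ.exists_mul_map_eq_smul hbar hJ
  refine ⟨c⁻¹ • twistingElement T bar s J, ?_, ?_, fun x => ?_⟩
  · rw [map_smulₛₗ, smul_mul_smul_comm, map_twistingElement_mul_self hT hbar hcomm hJ hc,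
      smul_smul, map_inv₀, hcstar, ← mul_inv, inv_mul_cancel₀ (mul_ne_zero hc0 hc0), one_smul]
  · rw [map_smul, map_twistingElement hT hcomm hs hl hTs]
  · rw [mul_smul_comm, smul_mul_assoc, twistingElement_intertwines hT hbar hcomm hs hJ]

end TwistingCocycle

section SplitReference

-- Mathlib's `Algebra.IsCentral.of_algEquiv` requires `B` and `C` to live in the same universe.
lemma isCentral_of_algEquiv {K B C : Type*} [CommSemiring K] [Semiring B] [Semiring C]
    [Algebra K B] [Algebra K C] [Algebra.IsCentral K C] (e : B ≃ₐ[K] C) :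
    Algebra.IsCentral K B where
  out x hx := by
    obtain ⟨k, hk⟩ := (Algebra.IsCentral.mem_center_iff K).mp
      ((MulEquivClass.apply_mem_center_iff e).mpr hx : e x ∈ Subalgebra.center K C)
    exact ⟨k, e.injective (by simpa [Algebra.ofId_apply] using hk.symm)⟩

lemma IsAntiInvolution.conj_algEquiv {K B C : Type*} [CommSemiring K] [Semiring B] [Semiring C]
    [Algebra K B] [Algebra K C] {σ : C →ₗ[K] C} (hσ : IsAntiInvolution σ) (e : B ≃ₐ[K] C) :
    IsAntiInvolution (e.symm.toLinearMap ∘ₗ σ ∘ₗ e.toLinearMap) where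
  involutive x := by simp [hσ.involutive _]
  map_mul_rev x y := by simp [hσ.map_mul_rev]

lemma IsConjugation.conj_algEquiv {K B C : Type*} [CommSemiring K] [StarRing K] [Semiring B]
    [Semiring C] [Algebra K B] [Algebra K C] {τ : C →ₛₗ[starRingEnd K] C} (hτ : IsConjugation τ)
    (e : B ≃ₐ[K] C) : IsConjugation (e.symm.toLinearMap.comp (τ.comp e.toLinearMap)) where
  involutive x := by simp [hτ.involutive _]
  map_mul x y := by simp [hτ.map_mul]

variable {n K B : Type*} [Fintype n] [DecidableEq n]

lemma isAntiInvolution_transpose [CommSemiring K] :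
    IsAntiInvolution (Matrix.transposeLinearEquiv n n K K).toLinearMap where
  involutive := Matrix.transpose_transpose
  map_mul_rev := Matrix.transpose_mul

lemma isConjugation_mapMatrix_star [CommSemiring K] [StarRing K] :
    IsConjugation ((starLinearEquiv K : K ≃ₗ⋆[K] K).toLinearMap.mapMatrix (m := n) (n := n)) where
  involutive x := by ext; simp
  map_mul x y := Matrix.map_mul (f := starRingEnd K)

variable [Field K] [Ring B] [Algebra K B]

lemma allAutInner_of_algEquiv_matrix (e : B ≃ₐ[K] Matrix n n K) :
    AllAutInner K B :=
  (allAutInner_end K (n → K)).of_algEquiv (e.trans Matrix.toLinAlgEquiv')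

variable [StarRing K]

theorem exists_isTwistingCocycle_of_isSimpleRing [IsAlgClosed K] [IsSimpleRing B]
    [FiniteDimensional K B] {σ : B →ₗ[K] B} {τ : B →ₛₗ[starRingEnd K] B}
    (hσ : IsAntiInvolution σ) (hτ : IsConjugation τ) : ∃ t, IsTwistingCocycle σ τ t := by
  obtain ⟨n, _, ⟨e⟩⟩ := IsSimpleRing.exists_algEquiv_matrix_of_isAlgClosed K B
  have := isCentral_of_algEquiv e
  exact exists_isTwistingCocycle (allAutInner_of_algEquiv_matrix e)
    (isAntiInvolution_transpose.conj_algEquiv e) (isConjugation_mapMatrix_star.conj_algEquiv e)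
    (fun x => by simp [Matrix.transpose_map]) hσ hτ

end SplitReference

section HilbertNinety

variable {B : Type*} [Ring B] [Algebra ℂ B] {τ : B →ₛₗ[starRingEnd ℂ] B}

lemma injective_neg_add_I_div_sub_I :
    Function.Injective fun r : ℝ => -(r + Complex.I) / (r - Complex.I) := by
  intro r s h
  have hI (x : ℝ) : (x : ℂ) - Complex.I ≠ 0 := fun h => by simpa using congrArg Complex.im h
  rw [div_eq_div_iff (hI r) (hI s)] at h
  have : 2 * Complex.I * r = 2 * Complex.I * s := by linear_combination h
  simpa using this

lemma exists_mem_adjoin_map_mul_eq (hτ : IsConjugation τ) {t : B} (ht : τ t * t = 1)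
    (hspec : (spectrum ℂ t).Finite) : ∃ y : Bˣ, (y : B) ∈ Algebra.adjoin ℂ {t} ∧ τ y * t = y := by
  -- Every `y = u + conj u * t` satisfies `τ y * t = y`; for all but finitely many of the scalars
  -- `u = r + I` it is invertible, as `-u / conj u` then avoids the spectrum of `t`.
  obtain ⟨_, ⟨r, rfl⟩, hr⟩ :=
    (Set.infinite_range_of_injective injective_neg_add_I_div_sub_I).exists_notMem_finite hspec
  have hI : (r - Complex.I) ≠ 0 := fun h => by simpa using congrArg Complex.im h
  obtain ⟨y, hy⟩ : IsUnit ((r + Complex.I) • 1 + (r - Complex.I) • t) := by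
    have hunit := (spectrum.notMem_iff.mp hr).neg.smul (Units.mk0 _ hI)
    rwa [neg_sub, Units.smul_mk0, smul_sub, Algebra.algebraMap_eq_smul_one, smul_smul,
      mul_div_cancel₀ _ hI, neg_smul, sub_neg_eq_add, add_comm] at hunit
  refine ⟨y, hy ▸ ?_, ?_⟩
  · exact add_mem (Subalgebra.smul_mem _ (one_mem _) _)
      (Subalgebra.smul_mem _ (Algebra.self_mem_adjoin_singleton ℂ t) _)
  · rw [hy, map_add, map_smulₛₗ, map_smulₛₗ, hτ.map_one, add_mul, smul_one_mul, smul_mul_assoc, ht,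
      add_comm]
    simp [← sub_eq_add_neg]

end HilbertNinety

section Twist

variable {K B : Type*} [CommSemiring K] [Semiring B] [Algebra K B] {σ : B →ₗ[K] B} {y : Bˣ}

/-- The map `x ↦ y * σ x * y⁻¹`, an anti-involution if `σ` is one and fixes `y`. -/
def twist (σ : B →ₗ[K] B) (y : Bˣ) : B →ₗ[K] B :=
  LinearMap.mulLeftRight K ((y : B), (↑y⁻¹ : B)) ∘ₗ σ

@[simp]
lemma twist_apply (σ : B →ₗ[K] B) (y : Bˣ) (x : B) : twist σ y x = y * σ x * ↑y⁻¹ := rfl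

lemma twist_apply_of_commute {x : B} (h : Commute (σ x) y) : twist σ y x = σ x := by
  rw [twist_apply, ← h.eq, Units.mul_inv_cancel_right]

lemma IsAntiInvolution.map_units_inv (hσ : IsAntiInvolution σ) (hy : σ y = y) :
    σ ↑y⁻¹ = ↑y⁻¹ := by
  simpa using hσ.map_units_inv_of_map_eq_smul (one_mul 1) (by rwa [one_smul])

lemma IsAntiInvolution.twist (hσ : IsAntiInvolution σ) (hy : σ y = y) :
    IsAntiInvolution (twist σ y) where
  involutive x := by
    simp [hσ.map_mul_rev, hσ.involutive x, hy, hσ.map_units_inv hy, mul_assoc]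
  map_mul_rev x z := by simp [hσ.map_mul_rev, mul_assoc]

lemma IsConjugation.map_twist [StarRing K] {τ : B →ₛₗ[starRingEnd K] B} (hτ : IsConjugation τ)
    {t : B} (ht : ∀ x, τ (σ x) * t = t * σ (τ x)) (hy : τ y * t = y) (x : B) :
    τ (twist σ y x) = twist σ y (τ x) := by
  have hyinv : τ ↑y⁻¹ * y = t := by
    rw [← hy, ← mul_assoc, ← hτ.map_mul, Units.inv_mul, hτ.map_one, one_mul]
  simp only [twist_apply, hτ.map_mul, Units.eq_mul_inv_iff_mul_eq]
  calc τ y * τ (σ x) * τ ↑y⁻¹ * y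
      = τ y * τ (σ x) * t := by rw [mul_assoc, hyinv]
    _ = y * σ (τ x) := by rw [mul_assoc, ht, ← mul_assoc, hy]

end Twist

section Rectification

theorem exists_unit_twist_commutes {B : Type*} [Ring B] [Algebra ℂ B] [IsSimpleRing B]
    [FiniteDimensional ℂ B] {σ : B →ₗ[ℂ] B} {τ : B →ₛₗ[starRingEnd ℂ] B}
    (hσ : IsAntiInvolution σ) (hτ : IsConjugation τ) :
    ∃ g : Bˣ, σ g = g ∧ (∀ x, τ (twist σ (g * g) x) = twist σ (g * g) (τ x)) ∧
      ∀ x, τ x = x → τ (σ x) = σ x → Commute (σ x) g := by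
  obtain ⟨t, ht⟩ := exists_isTwistingCocycle_of_isSimpleRing hσ hτ
  obtain ⟨y, hyt, hy⟩ := exists_mem_adjoin_map_mul_eq hτ ht.map_mul_self
    (finite_spectrum_of_isIntegral (Algebra.IsIntegral.isIntegral t))
  obtain ⟨g, hgy, rfl⟩ := exists_mem_adjoin_mul_self_eq (K := ℂ) y
  have hgt : (g : B) ∈ Algebra.adjoin ℂ {t} :=
    Algebra.adjoin_le (Set.singleton_subset_iff.mpr hyt) hgy
  refine ⟨g, hσ.map_eq_of_mem_adjoin ht.map_eq hgt, hτ.map_twist ht.intertwines hy,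
    fun x hx hσx => Algebra.commute_of_mem_adjoin_singleton_of_commute hgt ?_⟩
  simpa [hx, hσx, commute_iff_eq] using ht.intertwines x

end Rectification

section RealForm

variable {V W A : Type*} [AddCommGroup V] [Module ℝ V] [AddCommGroup W] [Module ℝ W]
  [Ring A] [Algebra ℝ A]

/-- The conjugation `z ⊗ v ↦ conj z ⊗ v` of the complexification of `V`. -/
noncomputable def complexConj (V : Type*) [AddCommGroup V] [Module ℝ V] :
    ℂ ⊗[ℝ] V →ₛₗ[starRingEnd ℂ] ℂ ⊗[ℝ] V where
  __ := Complex.conjAe.toLinearMap.rTensor V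
  map_smul' c z := by
    induction z with
    | zero => simp
    | tmul a v => simp [smul_tmul']
    | add x y hx hy => simp_all

@[simp]
lemma complexConj_tmul (z : ℂ) (v : V) : complexConj V (z ⊗ₜ v) = starRingEnd ℂ z ⊗ₜ v := rfl

lemma isConjugation_complexConj : IsConjugation (complexConj A) where
  involutive z := by
    induction z with
    | zero => simp
    | tmul c a => simp
    | add x y hx hy => simp [hx, hy]
  map_mul x y := by
    induction x with
    | zero => simp
    | tmul c a =>
      induction y with
      | zero => simp
      | tmul d b => simp
      | add y z hy hz => simp [mul_add, hy, hz]
    | add x z hx hz => simp [add_mul, hx, hz]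

lemma exists_add_complexConj_eq_one_tmul (z : ℂ ⊗[ℝ] V) :
    ∃ v : V, z + complexConj V z = 1 ⊗ₜ v := by
  induction z with
  | zero => exact ⟨0, by simp⟩
  | tmul c v =>
    refine ⟨(2 * c.re) • v, ?_⟩
    rw [complexConj_tmul, ← add_tmul, Complex.add_conj, ← smul_tmul, Complex.real_smul, mul_one]
  | add x y hx hy =>
    obtain ⟨v, hv⟩ := hx
    obtain ⟨w, hw⟩ := hy
    exact ⟨v + w, by rw [map_add, add_add_add_comm, hv, hw, tmul_add]⟩

lemma exists_eq_one_tmul_of_complexConj_eq {z : ℂ ⊗[ℝ] V} (hz : complexConj V z = z) :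
    ∃ v : V, z = 1 ⊗ₜ v := by
  obtain ⟨v, hv⟩ := exists_add_complexConj_eq_one_tmul z
  refine ⟨(2⁻¹ : ℝ) • v, ?_⟩
  rw [tmul_smul, ← hv, hz, ← two_smul ℝ, inv_smul_smul₀ two_ne_zero]

lemma one_tmul_injective : Function.Injective fun v : V => (1 : ℂ) ⊗ₜ[ℝ] v :=
  Module.Flat.tensorProduct_mk_injective ℝ V ℂ

lemma exists_baseChange_eq {ρ : ℂ ⊗[ℝ] V →ₗ[ℂ] ℂ ⊗[ℝ] W}
    (hρ : ∀ z, complexConj W (ρ z) = ρ (complexConj V z)) :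
    ∃ f : V →ₗ[ℝ] W, f.baseChange ℂ = ρ := by
  have hfix (v : V) : complexConj W (ρ (1 ⊗ₜ v)) = ρ (1 ⊗ₜ v) := by simp [hρ]
  choose f hf using fun v => exists_eq_one_tmul_of_complexConj_eq (hfix v)
  let f' : V →ₗ[ℝ] W :=
    { toFun := f
      map_add' := fun v w => one_tmul_injective (by simp [tmul_add, ← hf])
      map_smul' := fun r v => one_tmul_injective (by
        simp [tmul_smul, ← hf, LinearMap.map_smul_of_tower]) }
  exact ⟨f', by ext v; simp [f', hf]⟩

lemma IsAntiInvolution.of_baseChange {f : A →ₗ[ℝ] A} (hf : IsAntiInvolution (f.baseChange ℂ)) :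
    IsAntiInvolution f where
  involutive x := one_tmul_injective (by simpa using hf.involutive (1 ⊗ₜ x))
  map_mul_rev x y := one_tmul_injective (by simpa using hf.map_mul_rev (1 ⊗ₜ x) (1 ⊗ₜ y))

end RealForm

/-- Any ℂ-linear anti-involution `σ` of the complexification `A_ℂ = ℂ ⊗[ℝ] A` of a
finite-dimensional central simple ℝ-algebra `A` is equivalent to the ℂ-linear
extension of some ℝ-linear anti-involution `σ'` of `A`; moreover every `x ∈ A`
(viewed in `A_ℂ`) which is invertible and satisfies `σ(x)·x = 1` also satisfies
`σ'(x)·x = 1`. -/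
theorem descend_antiInvolution
    (A : Type*) [Ring A] [Algebra ℝ A] [FiniteDimensional ℝ A]
    [Algebra.IsCentral ℝ A] [IsSimpleRing A]
    (σ : (ℂ ⊗[ℝ] A) →ₗ[ℂ] (ℂ ⊗[ℝ] A))
    (hinv : ∀ x, σ (σ x) = x)
    (hanti : ∀ x y, σ (x * y) = σ y * σ x) :
    ∃ σ' : A →ₗ[ℝ] A,
      (∀ x, σ' (σ' x) = x) ∧
      (∀ x y, σ' (x * y) = σ' y * σ' x) ∧
      (∃ g : (ℂ ⊗[ℝ] A)ˣ,
        ∀ x, σ x = (↑g⁻¹ : ℂ ⊗[ℝ] A) *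
          (LinearMap.baseChange ℂ σ') ((↑g : ℂ ⊗[ℝ] A) * x * (↑g⁻¹ : ℂ ⊗[ℝ] A)) *
          (↑g : ℂ ⊗[ℝ] A)) ∧
      (∀ x : A, IsUnit x →
        σ ((1 : ℂ) ⊗ₜ[ℝ] x) * ((1 : ℂ) ⊗ₜ[ℝ] x) = 1 → σ' x * x = 1) := by
  have hσ : IsAntiInvolution σ := ⟨hinv, hanti⟩
  obtain ⟨g, hg, hcomm, hcommute⟩ := exists_unit_twist_commutes hσ isConjugation_complexConj
  obtain ⟨σ', hσ'⟩ := exists_baseChange_eq hcomm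
  have hanti' : IsAntiInvolution σ' :=
    .of_baseChange (hσ' ▸ hσ.twist (by simp [hσ.map_mul_rev, hg]))
  refine ⟨σ', hanti'.involutive, hanti'.map_mul_rev, ⟨g, fun x => ?_⟩, ?_⟩
  · simp [hσ', hσ.map_mul_rev, hg, hσ.map_units_inv hg, mul_assoc]
  · rintro _ ⟨x, rfl⟩ hx
    have hσx : σ (1 ⊗ₜ x) = 1 ⊗ₜ ↑x⁻¹ :=
      left_inv_eq_right_inv hx (by simp [Algebra.TensorProduct.one_def])
    have hgx := hcommute (1 ⊗ₜ x) (by simp) (by simp [hσx])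
    have htwist : σ'.baseChange ℂ (1 ⊗ₜ x) = σ (1 ⊗ₜ x) :=
      hσ' ▸ twist_apply_of_commute (hgx.mul_right hgx)
    refine one_tmul_injective ?_
    simpa [← htwist, Algebra.TensorProduct.one_def] using hx
end

section
/- Fix N ≥ 1 and identify M(m,ℍ) with the subalgebra {x ∈ M(2m,ℂ) : x J_m = J_m x̄} of M(2m,ℂ), where x̄ is the entrywise complex conjugate. Set O(N,ℂ) := {x ∈ M(N,ℂ) : xᵀ x = I_N}, Sp(m,ℂ) := {x ∈ M(2m,ℂ) : xᵀ J_m x = J_m}, O(p,q) := {x ∈ M(N,ℝ) : xᵀ I_{p,q} x = I_{p,q}}, Sp(m,ℝ) := {x ∈ M(2m,ℝ) : xᵀ J_m x = J_m}, O*(2m) := {x ∈ M(m,ℍ) : xᴴ (j·I_m) x = j·I_m}, and Sp(r,s) := {x ∈ M(r+s,ℍ) : xᴴ I_{r,s} x = I_{r,s}}. Then for every invertible g ∈ M(N,ℂ): (1) there exist p, q with p+q = N and an invertible h ∈ M(N,ℂ) such that h⁻¹ x h ∈ O(p,q) for every real invertible matrix x with g x g⁻¹ ∈ O(N,ℂ);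 (2) if N = 2m, there is an invertible h ∈ M(N,ℂ) with h⁻¹ x h ∈ Sp(m,ℝ) for every real invertible x with g x g⁻¹ ∈ Sp(m,ℂ); (3) if N = 2m, there is an invertible h ∈ M(N,ℂ) with h⁻¹ x h ∈ O*(2m) for every invertible x ∈ M(m,ℍ) with g x g⁻¹ ∈ O(N,ℂ); (4) if N = 2m, there exist r, s with r+s = m and an invertible h ∈ M(N,ℂ) with h⁻¹ x h ∈ Sp(r,s) for every invertible x ∈ M(m,ℍ) with g x g⁻¹ ∈ Sp(m,ℂ). -/
open Matrix

/-- `I_{p,q}`: the diagonal matrix `diag(I_p, −I_q)` of size `N = p + q`. -/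
def Ipq (N p : ℕ) : Matrix (Fin N) (Fin N) ℂ :=
  Matrix.diagonal fun k => if (k : ℕ) < p then 1 else -1

/-- The `2m × 2m` block matrix `J_m = [[0, −I_m],[I_m, 0]]`. -/
def Jc (m : ℕ) : Matrix (Fin m ⊕ Fin m) (Fin m ⊕ Fin m) ℂ :=
  Matrix.fromBlocks 0 (-1) 1 0

/-- A complex matrix with real entries, i.e. a member of `M(N,ℝ) ⊆ M(N,ℂ)`. -/
def IsRealMat {ι : Type} (x : Matrix ι ι ℂ) : Prop :=
  ∀ i j, (x i j).im = 0

/-- Membership in the image of `M(m,ℍ)` inside `M(2m,ℂ)`: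
`x J_m = J_m x̄`, where `x̄` is the entrywise complex conjugate. -/
def IsQuatMat (m : ℕ) (x : Matrix (Fin m ⊕ Fin m) (Fin m ⊕ Fin m) ℂ) : Prop :=
  x * Jc m = Jc m * x.map (starRingEnd ℂ)

/-- Membership in `O(N,ℂ)` (over any index type): `xᵀ x = 1`. -/
def MemOC {ι : Type} [Fintype ι] [DecidableEq ι] (x : Matrix ι ι ℂ) : Prop :=
  xᵀ * x = 1

/-- Membership in `Sp(m,ℂ)`: `xᵀ J_m x = J_m`. -/
def MemSpC (m : ℕ) (x : Matrix (Fin m ⊕ Fin m) (Fin m ⊕ Fin m) ℂ) : Prop :=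
  xᵀ * Jc m * x = Jc m

/-- Membership in `O(p,q) ⊆ M(N,ℝ)` (viewed inside `M(N,ℂ)`):
`x` is real and `xᵀ I_{p,q} x = I_{p,q}`. -/
def MemOpq (N p : ℕ) (x : Matrix (Fin N) (Fin N) ℂ) : Prop :=
  IsRealMat x ∧ xᵀ * Ipq N p * x = Ipq N p

/-- Membership in `Sp(m,ℝ) ⊆ M(2m,ℝ)` (viewed inside `M(2m,ℂ)`):
`x` is real and `xᵀ J_m x = J_m`. -/
def MemSpR (m : ℕ) (x : Matrix (Fin m ⊕ Fin m) (Fin m ⊕ Fin m) ℂ) : Prop :=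
  IsRealMat x ∧ xᵀ * Jc m * x = Jc m

/-- Membership in `O*(2m) ⊆ M(m,ℍ)` (viewed inside `M(2m,ℂ)`, where the
quaternionic matrix `j·I_m` corresponds to `J_m` and the quaternionic conjugate
transpose corresponds to `ᴴ`): `x` is quaternionic and `xᴴ J_m x = J_m`. -/
def MemOstar (m : ℕ) (x : Matrix (Fin m ⊕ Fin m) (Fin m ⊕ Fin m) ℂ) : Prop :=
  IsQuatMat m x ∧ xᴴ * Jc m * x = Jc m

/-- Membership in `Sp(r,s) ⊆ M(m,ℍ)`, `r + s = m` (viewed inside `M(2m,ℂ)`, where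
the quaternionic matrix `I_{r,s}` corresponds to `diag(I_{r,s}, I_{r,s})`):
`x` is quaternionic and `xᴴ I_{r,s} x = I_{r,s}`. -/
def MemSpRS (m r : ℕ) (x : Matrix (Fin m ⊕ Fin m) (Fin m ⊕ Fin m) ℂ) : Prop :=
  IsQuatMat m x ∧
    xᴴ * Matrix.fromBlocks (Ipq m r) 0 0 (Ipq m r) * x =
      Matrix.fromBlocks (Ipq m r) 0 0 (Ipq m r)

/-!
A matrix `x` with `g x g⁻¹` in `O(N,ℂ)` or `Sp(m,ℂ)` preserves the bilinear form `S = gᵀ g` or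
`S = gᵀ J g`. If `x` moreover lies in the real form `M(N,ℝ)` or `M(m,ℍ)`, the fixed algebra of a
conjugation `σ` commuting with transposition, then it also preserves `a S + ā σ(S)` for every
complex number `a`. This form is defined over `ℝ` or `ℍ`, and it is nondegenerate for a suitable `a`
because only finitely many points of the unit circle are eigenvalues of a given matrix. Its normal
form then gives `h`: a signature for symmetric real and hermitian quaternionic forms, a symplectic
basis for alternating real forms, and `diag(j, …, j)` for skew-hermitian quaternionic forms, where
all nonzero pure quaternions are congruent.
-/

/-- `*`-congruence `t = p* s p` with `p` invertible, in an arbitrary `*`-monoid. For matrices it is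
the relation between the Gram matrices of one sesquilinear form in two bases. -/
def StarCongruent {R : Type*} [Monoid R] [StarMul R] (s t : R) : Prop :=
  ∃ p : R, IsUnit p ∧ star p * s * p = t

namespace StarCongruent

section Monoid

variable {R R' : Type*} [Monoid R] [StarMul R] [Monoid R'] [StarMul R'] {s t u : R}

protected theorem refl (s : R) : StarCongruent s s :=
  ⟨1, isUnit_one, by simp⟩

protected theorem trans : StarCongruent s t → StarCongruent t u → StarCongruent s u := by
  rintro ⟨p, hp, rfl⟩ ⟨q, hq, rfl⟩
  exact ⟨p * q, hp.mul hq, by simp only [star_mul, mul_assoc]⟩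

theorem isUnit (h : StarCongruent s t) (hs : IsUnit s) : IsUnit t := by
  obtain ⟨p, hp, rfl⟩ := h
  exact (hp.star.mul hs).mul hp

theorem map (f : R →* R') (hf : ∀ x, f (star x) = star (f x)) (h : StarCongruent s t) :
    StarCongruent (f s) (f t) := by
  obtain ⟨p, hp, rfl⟩ := h
  exact ⟨f p, hp.map f, by simp only [map_mul, hf]⟩

theorem exists_units_conj (h : StarCongruent s t) :
    ∃ p : Rˣ, ∀ x, star x * s * x = s → star (↑p⁻¹ * x * ↑p) * t * (↑p⁻¹ * x * ↑p) = t := by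
  obtain ⟨_, ⟨p, rfl⟩, rfl⟩ := h
  refine ⟨p, fun x hx => ?_⟩
  calc star (↑p⁻¹ * x * ↑p) * (star ↑p * s * ↑p) * (↑p⁻¹ * x * ↑p)
      = star ↑p * star x * star (↑p * ↑p⁻¹ : R) * s * (↑p * ↑p⁻¹) * x * ↑p := by
        simp only [star_mul, mul_assoc]
    _ = star ↑p * (star x * s * x) * ↑p := by
        rw [Units.mul_inv, star_one, mul_one, mul_one]
        simp only [mul_assoc]
    _ = star ↑p * s * ↑p := by rw [hx]

end Monoid

theorem star_eq_smul {R : Type*} [Ring R] [StarRing R] {s t : R} {ε : ℤˣ}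
    (h : StarCongruent s t) (hs : star s = ε • s) : star t = ε • t := by
  obtain ⟨p, -, rfl⟩ := h
  simp only [star_mul, star_star, hs, mul_smul_comm, smul_mul_assoc, mul_assoc]

section Matrix

variable {m n R : Type*} [Fintype m] [DecidableEq m] [Fintype n] [DecidableEq n]
  [Ring R] [StarRing R]

theorem submatrix (e : m ≃ n) {S T : Matrix n n R} (h : StarCongruent S T) :
    StarCongruent (S.submatrix e e) (T.submatrix e e) :=
  h.map (reindexRingEquiv R e.symm : Matrix n n R →* Matrix m m R) fun _ => rfl

theorem fromBlocks_zero {A A' : Matrix m m R} {E E' : Matrix n n R}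
    (hA : StarCongruent A A') (hE : StarCongruent E E') :
    StarCongruent (fromBlocks A 0 0 E) (fromBlocks A' 0 0 E') := by
  obtain ⟨_, ⟨u, rfl⟩, rfl⟩ := hA
  obtain ⟨_, ⟨v, rfl⟩, rfl⟩ := hE
  refine ⟨fromBlocks u 0 0 v, isUnit_iff_exists.mpr ⟨fromBlocks ↑u⁻¹ 0 0 ↑v⁻¹, ?_, ?_⟩, ?_⟩ <;>
    simp [fromBlocks_multiply, star_eq_conjTranspose, fromBlocks_conjTranspose]

theorem submatrix_perm (e : Equiv.Perm n) (S : Matrix n n R) :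
    StarCongruent S (S.submatrix e e) := by
  refine ⟨(1 : Matrix n n R).submatrix id e,
    isUnit_iff_exists.mpr ⟨(1 : Matrix n n R).submatrix e id, ?_, ?_⟩, ?_⟩
  · simp [submatrix_mul_equiv]
  · ext i j
    simp [mul_apply, one_apply]
  · ext i j
    simp [star_eq_conjTranspose, mul_apply, one_apply]

theorem diagonal_star_mul_mul {D : Type*} [DivisionRing D] [StarRing D] (d : n → D) {c : n → D}
    (hc : ∀ i, c i ≠ 0) :
    StarCongruent (diagonal d) (diagonal fun i => star (c i) * d i * c i) := by
  refine ⟨diagonal c, isUnit_iff_exists.mpr ⟨diagonal fun i => (c i)⁻¹, ?_, ?_⟩, ?_⟩ <;>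
    simp [star_eq_conjTranspose, diagonal_conjTranspose, hc]

-- The unitriangular matrix `[[1, -A'B], [0, 1]]` clears the off-diagonal blocks.
theorem fromBlocks_schur {A A' : Matrix m m R} {B : Matrix m n R} {C : Matrix n m R}
    {E : Matrix n n R} {ε : ℤˣ} (hT : (fromBlocks A B C E)ᴴ = ε • fromBlocks A B C E)
    (hA : A * A' = 1) :
    StarCongruent (fromBlocks A B C E) (fromBlocks A 0 0 (E - C * A' * B)) := by
  set X := -(A' * B) with hX
  have h12 : A * X + B = 0 := by simp [hX, ← Matrix.mul_assoc, hA]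
  have h21 : Xᴴ * A + C = 0 := by
    rw [fromBlocks_conjTranspose, Units.smul_def, fromBlocks_smul, fromBlocks_inj] at hT
    obtain ⟨hAA, -, hBC, -⟩ := hT
    have h := congrArg conjTranspose h12
    rw [conjTranspose_add, conjTranspose_mul, hAA, hBC, Matrix.mul_smul, ← smul_add,
      conjTranspose_zero, ← Units.smul_def, smul_eq_zero_iff_eq] at h
    exact h
  have h22 : Xᴴ * B + E = E - C * A' * B := by
    calc Xᴴ * B + E = Xᴴ * A * A' * B + E := by rw [Matrix.mul_assoc Xᴴ, hA, Matrix.mul_one]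
      _ = E - C * A' * B := by
        rw [eq_neg_of_add_eq_zero_left h21, Matrix.neg_mul, Matrix.neg_mul, neg_add_eq_sub]
  refine ⟨fromBlocks 1 X 0 1, isUnit_iff_exists.mpr ⟨fromBlocks 1 (-X) 0 1, ?_, ?_⟩, ?_⟩
  · simp [fromBlocks_multiply]
  · simp [fromBlocks_multiply]
  · simp [star_eq_conjTranspose, fromBlocks_conjTranspose, fromBlocks_multiply, h12, h21, h22]

end Matrix

end StarCongruent

section Diagonalization

variable {n D : Type*} [Fintype n] [DecidableEq n] [DivisionRing D] [StarRing D] {ε : ℤˣ}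

-- If `T i j ≠ 0` but `T i i = T j j = 0`, adding `(T i j)⁻¹ y` times the `j`-th basis vector to the
-- `i`-th one turns the `i`-th diagonal entry into `y + ε y*`.
theorem exists_starCongruent_apply_self_ne_zero (hε : ∃ y : D, y + ε • star y ≠ 0)
    {T : Matrix n n D} (hT : Tᴴ = ε • T) (hT0 : T ≠ 0) :
    ∃ T', StarCongruent T T' ∧ ∃ i, T' i i ≠ 0 := by
  by_cases hdiag : ∃ i, T i i ≠ 0
  · exact ⟨T, .refl T, hdiag⟩
  push Not at hdiag
  obtain ⟨i, j, hij⟩ : ∃ i j, T i j ≠ 0 := by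
    by_contra! h
    exact hT0 (Matrix.ext h)
  have hne : i ≠ j := by
    rintro rfl
    exact hij (hdiag i)
  obtain ⟨y, hy⟩ := hε
  set c : D := (T i j)⁻¹ * y with hc
  have hnil : IsNilpotent (single j i c : Matrix n n D) :=
    ⟨2, by rw [sq, single_mul_single_of_ne _ _ _ _ hne]⟩
  refine ⟨_, ⟨1 + single j i c, hnil.isUnit_one_add, rfl⟩, i, ?_⟩
  have hTc : T i j * c = y := by rw [hc, mul_inv_cancel_left₀ hij]
  have hcT : star c * T j i = ε • star y := by
    have hji : T j i = ε • star (T i j) := by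
      have h := congrFun₂ hT j i
      rw [conjTranspose_apply, Matrix.smul_apply] at h
      rw [h, smul_smul, Int.units_mul_self, one_smul]
    rw [hji, mul_smul_comm, ← star_mul, hTc]
  simpa [star_eq_conjTranspose, add_mul, mul_add, hdiag, hTc, hcT, add_comm] using hy

theorem exists_starCongruent_fromBlocks_of_apply_self_ne_zero {T : Matrix n n D}
    (hT : Tᴴ = ε • T) {i : n} (hi : T i i ≠ 0) :
    ∃ (A : Matrix {k // k = i} {k // k = i} D) (E : Matrix {k // k ≠ i} {k // k ≠ i} D),
      Eᴴ = ε • E ∧ StarCongruent (T.submatrix (Equiv.sumCompl (· = i)) (Equiv.sumCompl (· = i)))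
        (fromBlocks A 0 0 E) := by
  set T' := T.submatrix (Equiv.sumCompl (· = i)) (Equiv.sumCompl (· = i)) with hT'
  have hT'ε : T'ᴴ = ε • T' := by rw [hT', conjTranspose_submatrix, hT]; rfl
  have hA : T'.toBlocks₁₁ * diagonal (fun _ => (T i i)⁻¹) = 1 := by
    ext ⟨a, rfl⟩ ⟨b, hb⟩
    subst hb
    simp [hT', toBlocks₁₁, hi]
  rw [← fromBlocks_toBlocks T'] at hT'ε
  have hcong := StarCongruent.fromBlocks_schur hT'ε hA
  rw [fromBlocks_toBlocks] at hcong
  refine ⟨_, _, ?_, hcong⟩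
  have h := hcong.star_eq_smul (by rwa [fromBlocks_toBlocks] at hT'ε)
  rw [star_eq_conjTranspose, fromBlocks_conjTranspose, Units.smul_def, fromBlocks_smul,
    fromBlocks_inj] at h
  exact h.2.2.2

theorem exists_starCongruent_diagonal (hε : ∃ y : D, y + ε • star y ≠ 0) (T : Matrix n n D)
    (hT : Tᴴ = ε • T) : ∃ d : n → D, StarCongruent T (diagonal d) := by
  induction hcard : Fintype.card n using Nat.strong_induction_on generalizing n with
  | _ N ih =>
  by_cases hT0 : T = 0
  · exact ⟨0, by simpa [hT0] using StarCongruent.refl _⟩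
  obtain ⟨T', hTT', i, hi⟩ := exists_starCongruent_apply_self_ne_zero hε hT hT0
  obtain ⟨A, E, hE, hblocks⟩ :=
    exists_starCongruent_fromBlocks_of_apply_self_ne_zero (hTT'.star_eq_smul hT) hi
  obtain ⟨d, hd⟩ := ih _ (hcard ▸ Fintype.card_subtype_lt (x := i) (by simp)) E hE rfl
  have hA : A = diagonal A.diag := by
    ext ⟨a, rfl⟩ ⟨b, hb⟩
    subst hb
    simp
  have hsum := hblocks.trans (.fromBlocks_zero (.refl A) hd)
  rw [hA, fromBlocks_diagonal] at hsum
  have hT'd := hsum.submatrix (Equiv.sumCompl (· = i)).symm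
  rw [submatrix_diagonal_equiv, submatrix_submatrix, Equiv.self_comp_symm, submatrix_id_id] at hT'd
  exact ⟨_, hTT'.trans hT'd⟩

theorem exists_starCongruent_diagonal_of_normalForm (hε : ∃ y : D, y + ε • star y ≠ 0)
    {p : D → Prop} (hp : ∀ a : D, a ≠ 0 → star a = ε • a → ∃ c : D, c ≠ 0 ∧ p (star c * a * c))
    {T : Matrix n n D} (hT : Tᴴ = ε • T) (hu : IsUnit T) :
    ∃ d : n → D, (∀ i, p (d i)) ∧ StarCongruent T (diagonal d) := by
  obtain ⟨d, hd⟩ := exists_starCongruent_diagonal hε T hT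
  have hd0 (i : n) : d i ≠ 0 := by
    obtain ⟨M, hM, -⟩ := isUnit_iff_exists.mp (hd.isUnit hu)
    intro hi
    simpa [hi] using congrFun₂ hM i i
  have hdε (i : n) : star (d i) = ε • d i := by
    simpa [star_eq_conjTranspose] using congrFun₂ (hd.star_eq_smul hT) i i
  choose c hc0 hc using fun i => hp (d i) (hd0 i) (hdε i)
  exact ⟨_, hc, hd.trans (.diagonal_star_mul_mul d hc0)⟩

end Diagonalization

theorem exists_perm_apply_iff_val_lt {n : ℕ} (p : Fin n → Prop) :
    ∃ r ≤ n, ∃ e : Equiv.Perm (Fin n), ∀ k, p (e k) ↔ (k : ℕ) < r := by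
  classical
  set r := Fintype.card {i // p i} with hr
  have hrn : r ≤ n := by simpa using Fintype.card_subtype_le p
  have hcard : Fintype.card {k : Fin n // (k : ℕ) < r} = Fintype.card {i // p i} := by
    rw [Fintype.card_subtype, Fin.card_filter_val_lt, ← hr, min_eq_right hrn]
  set e₀ := Fintype.equivOfCardEq hcard
  refine ⟨r, hrn, e₀.extendSubtype, fun k => ⟨fun hk => ?_, e₀.extendSubtype_mem k⟩⟩
  by_contra hkr
  exact e₀.extendSubtype_not_mem k hkr hk

/-- The matrix `I_{p,q} = diag(1, …, 1, -1, …, -1)` of size `n = p + q`, with `p` entries `1`, over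
an arbitrary ring. -/
def signatureMatrix (R : Type*) [Ring R] (n p : ℕ) : Matrix (Fin n) (Fin n) R :=
  diagonal fun k => if (k : ℕ) < p then 1 else -1

theorem exists_starCongruent_signatureMatrix {D : Type*} [DivisionRing D] [StarRing D]
    (h2 : (2 : D) ≠ 0)
    (hD : ∀ a : D, a ≠ 0 → star a = a →
      ∃ c : D, c ≠ 0 ∧ (star c * a * c = 1 ∨ star c * a * c = -1))
    {n : ℕ} {T : Matrix (Fin n) (Fin n) D} (hT : Tᴴ = T) (hu : IsUnit T) :
    ∃ p q, p + q = n ∧ StarCongruent T (signatureMatrix D n p) := by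
  obtain ⟨d, hd, hTd⟩ := exists_starCongruent_diagonal_of_normalForm (ε := 1)
    (p := fun a => a = 1 ∨ a = -1) ⟨(1 : D), by simpa [one_add_one_eq_two] using h2⟩
    (by simpa using hD) (by simpa using hT) hu
  obtain ⟨p, hpn, e, he⟩ := exists_perm_apply_iff_val_lt fun i => d i = 1
  have hde : d ∘ e = fun k : Fin n => if (k : ℕ) < p then 1 else -1 := by
    funext k
    split_ifs with hk
    · exact (he k).mpr hk
    · exact (hd (e k)).resolve_left (mt (he k).mp hk)
  refine ⟨p, n - p, Nat.add_sub_cancel' hpn, hTd.trans ?_⟩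
  simpa [signatureMatrix, submatrix_diagonal_equiv, hde] using
    StarCongruent.submatrix_perm e (diagonal d)

theorem isUnit_J {n A : Type*} [Fintype n] [DecidableEq n] [CommRing A] :
    IsUnit (J n A) :=
  (isUnit_iff_isUnit_det _).mpr (isUnit_det_J n A)

section SymplecticBasis

open Module

variable {K V : Type*} [Field K] [AddCommGroup V] [Module K V] {B : LinearMap.BilinForm K V}

theorem exists_apply_eq_one [Nontrivial V] (hB : B.Nondegenerate) :
    ∃ a b, B b a = 1 := by
  obtain ⟨a, ha⟩ := exists_ne (0 : V)
  obtain ⟨b, hb⟩ : ∃ b, B b a ≠ 0 := by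
    by_contra! h
    exact ha (hB.2 a h)
  exact ⟨a, (B b a)⁻¹ • b, by simp [hb]⟩

theorem mem_orthogonal_span_pair_iff {a b w : V} :
    w ∈ B.orthogonal (Submodule.span K {a, b}) ↔ B a w = 0 ∧ B b w = 0 := by
  refine ⟨fun hw => ⟨hw a (Submodule.mem_span_of_mem (by simp)),
    hw b (Submodule.mem_span_of_mem (by simp))⟩, fun ⟨ha, hb⟩ v hv => ?_⟩
  obtain ⟨s, t, rfl⟩ := Submodule.mem_span_pair.mp hv
  simp [ha, hb]

theorem disjoint_span_pair_orthogonal (hB : B.IsAlt) {a b : V} (hba : B b a = 1) :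
    Disjoint (Submodule.span K {a, b}) (B.orthogonal (Submodule.span K {a, b})) := by
  have hab : B a b = -1 := by rw [← hB.neg_eq, hba]
  rw [Submodule.disjoint_def]
  intro v hv hv'
  obtain ⟨s, t, rfl⟩ := Submodule.mem_span_pair.mp hv
  obtain ⟨ha, hb⟩ := mem_orthogonal_span_pair_iff.mp hv'
  have ht : t = 0 := by simpa [hB.self_eq_zero, hab] using ha
  have hs : s = 0 := by simpa [hB.self_eq_zero, hba] using hb
  simp [hs, ht]

theorem linearIndependent_pair_of_isAlt (hB : B.IsAlt) {a b : V} (hba : B b a = 1) :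
    LinearIndependent K ![a, b] := by
  rw [LinearIndependent.pair_iff]
  intro s t h
  have hs : s = 0 := by simpa [hB.self_eq_zero, hba] using congrArg (B b) h
  have ht : t = 0 := by simpa [hB.self_eq_zero, hba] using congrArg (B · a) h
  exact ⟨hs, ht⟩

theorem isAlt_toBilin'_of_transpose_eq_neg {n : Type*} [Fintype n] [DecidableEq n] [NeZero (2 : K)]
    {T : Matrix n n K} (hT : Tᵀ = -T) : (toBilin' T).IsAlt := by
  intro x
  have hskew : x ⬝ᵥ T *ᵥ x = -(x ⬝ᵥ T *ᵥ x) := by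
    nth_rw 1 [dotProduct_mulVec, ← mulVec_transpose, hT, neg_mulVec, neg_dotProduct,
      dotProduct_comm]
  rw [toBilin'_apply']
  have h2 : 2 * (x ⬝ᵥ T *ᵥ x) = 0 := by linear_combination hskew
  exact (mul_eq_zero.mp h2).resolve_left two_ne_zero

variable [FiniteDimensional K V]

theorem restrict_orthogonal_span_pair_nondegenerate (hB : B.IsAlt) (hnd : B.Nondegenerate)
    {a b : V} (hba : B b a = 1) :
    (B.restrict (B.orthogonal (Submodule.span K {a, b}))).Nondegenerate := by
  apply B.nondegenerate_restrict_of_disjoint_orthogonal hB.isRefl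
  rw [LinearMap.BilinForm.orthogonal_orthogonal hnd hB.isRefl]
  exact (disjoint_span_pair_orthogonal hB hba).symm

theorem finrank_orthogonal_span_pair_add_two (hB : B.IsAlt) (hnd : B.Nondegenerate)
    {a b : V} (hba : B b a = 1) :
    finrank K (B.orthogonal (Submodule.span K {a, b})) + 2 = finrank K V := by
  have hW : finrank K (Submodule.span K {a, b}) = 2 := by
    rw [← Matrix.range_cons_cons_empty a b ![],
      finrank_span_eq_card (linearIndependent_pair_of_isAlt hB hba), Fintype.card_fin]
  have h := (Submodule.span K {a, b}).finrank_le
  rw [LinearMap.BilinForm.finrank_orthogonal hnd, hW]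
  omega

theorem exists_gram_eq_J (hB : B.IsAlt) (hnd : B.Nondegenerate) {m : ℕ}
    (hV : finrank K V = 2 * m) :
    ∃ v : Fin m ⊕ Fin m → V, ∀ i j, B (v i) (v j) = J (Fin m) K i j := by
  induction m generalizing V with
  | zero => exact ⟨isEmptyElim, isEmptyElim⟩
  | succ m ih =>
    have : Nontrivial V := nontrivial_of_finrank_pos (R := K) (by omega)
    obtain ⟨a, b, hba⟩ := exists_apply_eq_one hnd
    have hab : B a b = -1 := by rw [← hB.neg_eq, hba]
    obtain ⟨v, hv⟩ := ih (B := B.restrict _) (fun w => hB w)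
      (restrict_orthogonal_span_pair_nondegenerate hB hnd hba)
      (by have := finrank_orthogonal_span_pair_add_two hB hnd hba; omega)
    have hav (k) : B a (v k) = 0 := (mem_orthogonal_span_pair_iff.mp (v k).2).1
    have hbv (k) : B b (v k) = 0 := (mem_orthogonal_span_pair_iff.mp (v k).2).2
    have hva (k) : B (v k) a = 0 := hB.isRefl.eq_iff.mp (hav k)
    have hvb (k) : B (v k) b = 0 := hB.isRefl.eq_iff.mp (hbv k)
    simp only [LinearMap.BilinForm.restrict_apply, LinearMap.domRestrict_apply] at hv
    refine ⟨Sum.elim (Fin.cons a fun i => v (.inl i)) (Fin.cons b fun i => v (.inr i)), ?_⟩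
    rintro (i | i) (j | j) <;> cases i using Fin.cases <;> cases j using Fin.cases <;>
      simp [J, one_apply, hB.self_eq_zero, hab, hba, hav, hbv, hva, hvb, hv, Fin.succ_ne_zero,
        (Fin.succ_ne_zero _).symm]

theorem exists_isUnit_transpose_mul_mul_eq_J {m : ℕ}
    {T : Matrix (Fin m ⊕ Fin m) (Fin m ⊕ Fin m) K} (hT : (toBilin' T).IsAlt) (hu : IsUnit T) :
    ∃ P, IsUnit P ∧ Pᵀ * T * P = J (Fin m) K := by
  have hdet : IsUnit T.det := (isUnit_iff_isUnit_det T).mp hu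
  obtain ⟨v, hv⟩ := exists_gram_eq_J hT
    (LinearMap.BilinForm.nondegenerate_toBilin'_of_det_ne_zero' T hdet.ne_zero)
    (m := m) (by simp [two_mul])
  have hPT : (of v) * T * (of v)ᵀ = J (Fin m) K := by
    ext i j
    rw [← hv, toBilin'_apply', Matrix.mul_assoc]
    rfl
  refine ⟨(of v)ᵀ, ?_, by rwa [transpose_transpose]⟩
  obtain ⟨M, -, hM⟩ := isUnit_iff_exists.mp (isUnit_J (n := Fin m) (A := K))
  rw [← hPT, ← Matrix.mul_assoc] at hM
  exact IsUnit.of_mul_eq_one_right _ hM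

end SymplecticBasis

section RealStructure

open ComplexConjugate

variable {n : Type*} [Fintype n] [DecidableEq n]

/-- A real structure on the algebra of complex matrices compatible with transposition: a
conjugate-linear involutive ring endomorphism `σ` that commutes with `ᵀ`. Its fixed points form a
real form of the matrix algebra. -/
structure IsRealStructure (σ : Matrix n n ℂ →+* Matrix n n ℂ) : Prop where
  map_smul : ∀ (a : ℂ) x, σ (a • x) = conj a • σ x
  map_map : ∀ x, σ (σ x) = x
  map_transpose : ∀ x, σ xᵀ = (σ x)ᵀ

theorem infinite_sphere_complex : (Metric.sphere (0 : ℂ) 1).Infinite :=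
  (isPreconnected_sphere (by simp) 0 1).infinite_of_nontrivial
    ⟨1, by simp, -1, by simp, by norm_num⟩

-- For `|a| = 1` the matrix is singular only if `-a²` is an eigenvalue of `S⁻¹ S'`.
theorem exists_isUnit_smul_add_conj_smul {S : Matrix n n ℂ} (hS : IsUnit S) (S' : Matrix n n ℂ) :
    ∃ a : ℂ, IsUnit (a • S + conj a • S') := by
  obtain ⟨R, hSR, -⟩ := isUnit_iff_exists.mp hS
  obtain ⟨w, hw, hspec⟩ :=
    (infinite_sphere_complex.sdiff (Matrix.finite_spectrum (-(R * S')))).nonempty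
  obtain ⟨a, rfl⟩ := IsAlgClosed.exists_pow_nat_eq w two_pos
  rw [mem_sphere_zero_iff_norm, norm_pow,
    pow_eq_one_iff_of_nonneg (norm_nonneg a) two_ne_zero] at hw
  have haa : conj a * a = 1 := by simp [Complex.conj_mul', hw]
  have hconj : IsUnit (algebraMap ℂ (Matrix n n ℂ) (conj a)) :=
    (IsUnit.of_mul_eq_one _ haa).map _
  have hfactor : a • S + conj a • S' =
      algebraMap ℂ _ (conj a) * S * (algebraMap ℂ _ (a ^ 2) - -(R * S')) := by
    rw [sub_neg_eq_add, mul_add, Algebra.algebraMap_eq_smul_one, Algebra.algebraMap_eq_smul_one,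
      smul_mul_assoc, one_mul, mul_smul_comm, mul_one, smul_mul_assoc, ← Matrix.mul_assoc, hSR,
      one_mul, smul_smul, sq, mul_comm (a * a), ← mul_assoc, haa, one_mul]
  exact ⟨a, hfactor ▸ (hconj.mul hS).mul (spectrum.notMem_iff.mp hspec)⟩

theorem IsRealStructure.exists_invariant_fixed_form {σ : Matrix n n ℂ →+* Matrix n n ℂ}
    (hσ : IsRealStructure σ) {S : Matrix n n ℂ} (hS : IsUnit S) {ε : ℤˣ} (hε : Sᵀ = ε • S) :
    ∃ T, IsUnit T ∧ σ T = T ∧ Tᵀ = ε • T ∧ ∀ x, σ x = x → xᵀ * S * x = S → xᵀ * T * x = T := by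
  obtain ⟨a, ha⟩ := exists_isUnit_smul_add_conj_smul hS (σ S)
  refine ⟨_, ha, ?_, ?_, fun x hx hxS => ?_⟩
  · simp only [map_add, hσ.map_smul, hσ.map_map, Complex.conj_conj, add_comm]
  · have hσS : (σ S)ᵀ = ε • σ S := by rw [← hσ.map_transpose, hε, Units.smul_def, map_zsmul]; rfl
    simp only [transpose_add, transpose_smul, hε, hσS, smul_add, smul_comm ε]
  · have hxσS : xᵀ * σ S * x = σ S := by
      simpa only [map_mul, hσ.map_transpose, hx] using congrArg σ hxS
    simp only [Matrix.mul_add, Matrix.add_mul, Matrix.mul_smul, Matrix.smul_mul, hxS, hxσS]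

theorem isRealStructure_conj : IsRealStructure (starRingEnd ℂ).mapMatrix (n := n) where
  map_smul a x := by ext; simp
  map_map x := by ext; simp
  map_transpose x := rfl

theorem exists_map_ofReal_eq {x : Matrix n n ℂ} (hx : (starRingEnd ℂ).mapMatrix x = x) :
    ∃ y : Matrix n n ℝ, Complex.ofRealHom.mapMatrix y = x := by
  refine ⟨x.map Complex.re, ?_⟩
  ext i j
  exact Complex.conj_eq_iff_re.mp (congrFun₂ hx i j)

theorem ofReal_mapMatrix_injective :
    Function.Injective (Complex.ofRealHom.mapMatrix : Matrix n n ℝ →+* Matrix n n ℂ) :=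
  Matrix.map_injective Complex.ofReal_injective

theorem exists_invariant_real_form {S : Matrix n n ℂ} (hS : IsUnit S) {ε : ℤˣ} (hε : Sᵀ = ε • S) :
    ∃ T : Matrix n n ℝ, IsUnit T ∧ Tᴴ = ε • T ∧ ∀ y : Matrix n n ℝ,
      (Complex.ofRealHom.mapMatrix y)ᵀ * S * Complex.ofRealHom.mapMatrix y = S →
        yᴴ * T * y = T := by
  obtain ⟨T', hu, hconj, hT', hpres⟩ := isRealStructure_conj.exists_invariant_fixed_form hS hε
  obtain ⟨T, rfl⟩ := exists_map_ofReal_eq hconj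
  refine ⟨T, ?_, ?_, fun y hy => ?_⟩
  · rw [isUnit_iff_isUnit_det, ← RingHom.map_det] at hu
    simpa [isUnit_iff_isUnit_det] using hu
  · apply ofReal_mapMatrix_injective
    rw [conjTranspose_eq_transpose_of_trivial, Units.smul_def, map_zsmul]
    exact hT'
  · apply ofReal_mapMatrix_injective
    rw [conjTranspose_eq_transpose_of_trivial, map_mul, map_mul]
    exact hpres _ (Matrix.ext fun i j => Complex.conj_ofReal (y i j)) hy

end RealStructure

section QuaternionEmbedding

open ComplexConjugate Quaternion

/-- The complex number `z` in the decomposition `q = z + j w` of a quaternion, where `z` and `w` lie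
in `ℂ = ℝ + ℝ i ⊆ ℍ`. -/
def complexPart : ℍ[ℝ] →+ ℂ where
  toFun q := ⟨q.re, q.imI⟩
  map_zero' := rfl
  map_add' _ _ := rfl

/-- The complex number `w` in the decomposition `q = z + j w` of a quaternion, where `z` and `w` lie
in `ℂ = ℝ + ℝ i ⊆ ℍ`; the sign of its imaginary part comes from `j i = -k`. -/
def jPart : ℍ[ℝ] →+ ℂ where
  toFun q := ⟨q.imJ, -q.imK⟩
  map_zero' := by simp [Complex.ext_iff]
  map_add' p q := by simp [Complex.ext_iff, add_comm]

theorem complexPart_apply (q : ℍ[ℝ]) : complexPart q = ⟨q.re, q.imI⟩ := rfl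

theorem jPart_apply (q : ℍ[ℝ]) : jPart q = ⟨q.imJ, -q.imK⟩ := rfl

theorem complexPart_mul (p q : ℍ[ℝ]) :
    complexPart (p * q) = complexPart p * complexPart q - conj (jPart p) * jPart q := by
  apply Complex.ext <;> simp [complexPart_apply, jPart_apply] <;> ring

theorem jPart_mul (p q : ℍ[ℝ]) :
    jPart (p * q) = jPart p * complexPart q + conj (complexPart p) * jPart q := by
  apply Complex.ext <;> simp [complexPart_apply, jPart_apply] <;> ring

theorem complexPart_one : complexPart 1 = 1 := rfl

theorem jPart_one : jPart 1 = 0 := by simp [jPart_apply, Complex.ext_iff]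

theorem complexPart_star (q : ℍ[ℝ]) : complexPart (star q) = conj (complexPart q) := by
  simp [complexPart_apply, Complex.ext_iff]

theorem jPart_star (q : ℍ[ℝ]) : jPart (star q) = -jPart q := by
  simp [jPart_apply, Complex.ext_iff]

variable {n : Type*} [Fintype n] [DecidableEq n]

/-- The embedding of `M(n,ℍ)` into `M(2n,ℂ)`, through the action of quaternionic matrices on the
right complex vector space `ℍⁿ = ℂⁿ ⊕ j ℂⁿ`. -/
def quaternionEmbedding : Matrix n n ℍ[ℝ] →+* Matrix (n ⊕ n) (n ⊕ n) ℂ where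
  toFun x := fromBlocks (x.map complexPart) (-(x.map jPart).map conj)
    (x.map jPart) ((x.map complexPart).map conj)
  map_one' := by
    rw [← fromBlocks_one]
    congr 1 <;> ext i j <;> obtain rfl | h := eq_or_ne i j <;>
      simp [*, complexPart_one, jPart_one]
  map_mul' x y := by
    rw [fromBlocks_multiply]
    congr 1 <;> ext i j <;>
      simp [mul_apply, complexPart_mul, jPart_mul, Finset.sum_add_distrib, sub_eq_add_neg, add_comm]
  map_zero' := by
    rw [← fromBlocks_zero]
    congr 1 <;> ext i j <;> simp
  map_add' x y := by
    rw [fromBlocks_add]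
    congr 1 <;> ext i j <;> simp [add_comm]

theorem quaternionEmbedding_apply (x : Matrix n n ℍ[ℝ]) :
    quaternionEmbedding x = fromBlocks (x.map complexPart) (-(x.map jPart).map conj)
      (x.map jPart) ((x.map complexPart).map conj) := rfl

theorem quaternionEmbedding_conjTranspose (x : Matrix n n ℍ[ℝ]) :
    quaternionEmbedding xᴴ = (quaternionEmbedding x)ᴴ := by
  rw [quaternionEmbedding_apply, quaternionEmbedding_apply, fromBlocks_conjTranspose]
  congr 1 <;> ext i j <;> simp [complexPart_star, jPart_star]

theorem quaternionEmbedding_injective :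
    Function.Injective (quaternionEmbedding : Matrix n n ℍ[ℝ] → _) := by
  intro x y hxy
  rw [quaternionEmbedding_apply, quaternionEmbedding_apply, fromBlocks_inj] at hxy
  obtain ⟨hcomplex, -, hj, -⟩ := hxy
  ext i j
  · exact congrArg Complex.re (congrFun₂ hcomplex i j)
  · exact congrArg Complex.im (congrFun₂ hcomplex i j)
  · exact congrArg Complex.re (congrFun₂ hj i j)
  · exact neg_inj.mp (congrArg Complex.im (congrFun₂ hj i j))

/-- The real structure `x ↦ J x̄ J⁻¹` on `M(2n,ℂ)` whose fixed points are the quaternionic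
matrices. -/
def quaternionConj : Matrix (n ⊕ n) (n ⊕ n) ℂ →+* Matrix (n ⊕ n) (n ⊕ n) ℂ where
  toFun x := J n ℂ * x.map conj * -J n ℂ
  map_one' := by simp [J_squared]
  map_mul' x y := by
    simp only [Matrix.map_mul, Matrix.mul_assoc, Matrix.neg_mul, Matrix.mul_neg, neg_neg]
    simp only [← Matrix.mul_assoc (J n ℂ) (J n ℂ), J_squared, Matrix.neg_mul, Matrix.mul_neg,
      Matrix.one_mul]
  map_zero' := by simp
  map_add' x y := by simp [Matrix.map_add, Matrix.mul_add, Matrix.add_mul, add_comm]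

theorem quaternionConj_apply (x : Matrix (n ⊕ n) (n ⊕ n) ℂ) :
    quaternionConj x = J n ℂ * x.map conj * -J n ℂ := rfl

theorem quaternionConj_fromBlocks (A B C D : Matrix n n ℂ) :
    quaternionConj (fromBlocks A B C D) =
      fromBlocks (D.map conj) (-C.map conj) (-B.map conj) (A.map conj) := by
  simp [quaternionConj_apply, J, fromBlocks_map, fromBlocks_multiply, fromBlocks_neg]

theorem quaternionConj_J : quaternionConj (J n ℂ) = J n ℂ := by
  rw [quaternionConj_apply, map_J, Matrix.mul_neg, J_squared, Matrix.neg_mul, Matrix.one_mul,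
    neg_neg]

theorem quaternionConj_eq_self_iff {x : Matrix (n ⊕ n) (n ⊕ n) ℂ} :
    quaternionConj x = x ↔ x * J n ℂ = J n ℂ * x.map conj := by
  rw [← isUnit_J.mul_left_inj, quaternionConj_apply, Matrix.mul_assoc, Matrix.neg_mul, J_squared,
    neg_neg, Matrix.mul_one, eq_comm]

theorem isRealStructure_quaternionConj : IsRealStructure (quaternionConj (n := n)) where
  map_smul a x := by
    rw [← fromBlocks_toBlocks x, fromBlocks_smul, quaternionConj_fromBlocks,
      quaternionConj_fromBlocks, fromBlocks_smul]
    congr 1 <;> ext <;> simp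
  map_map x := by
    rw [← fromBlocks_toBlocks x, quaternionConj_fromBlocks, quaternionConj_fromBlocks]
    congr 1 <;> ext <;> simp
  map_transpose x := by
    rw [← fromBlocks_toBlocks x, fromBlocks_transpose, quaternionConj_fromBlocks,
      quaternionConj_fromBlocks, fromBlocks_transpose]
    rfl

theorem quaternionConj_quaternionEmbedding (x : Matrix n n ℍ[ℝ]) :
    quaternionConj (quaternionEmbedding x) = quaternionEmbedding x := by
  rw [quaternionEmbedding_apply, quaternionConj_fromBlocks]
  congr 1 <;> ext <;> simp

theorem exists_quaternionEmbedding_eq {x : Matrix (n ⊕ n) (n ⊕ n) ℂ} (hx : quaternionConj x = x) :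
    ∃ y, quaternionEmbedding y = x := by
  rw [← fromBlocks_toBlocks x, quaternionConj_fromBlocks, fromBlocks_inj] at hx
  obtain ⟨-, h₁₂, -, h₂₂⟩ := hx
  set y : Matrix n n ℍ[ℝ] := of fun i j => ⟨(x (.inl i) (.inl j)).re, (x (.inl i) (.inl j)).im,
    (x (.inr i) (.inl j)).re, -(x (.inr i) (.inl j)).im⟩
  have hcomplex : y.map complexPart = x.toBlocks₁₁ := rfl
  have hj : y.map jPart = x.toBlocks₂₁ := Matrix.ext fun i j => Complex.ext rfl (neg_neg _)
  exact ⟨y, by rw [quaternionEmbedding_apply, hcomplex, hj, h₁₂, h₂₂, fromBlocks_toBlocks]⟩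

theorem isUnit_of_isUnit_quaternionEmbedding {x : Matrix n n ℍ[ℝ]}
    (hx : IsUnit (quaternionEmbedding x)) : IsUnit x := by
  obtain ⟨z, hxz, hzx⟩ := isUnit_iff_exists.mp hx
  have hz : quaternionConj z = z := by
    apply left_inv_eq_right_inv _ hxz
    rw [← quaternionConj_quaternionEmbedding x, ← map_mul, hzx, map_one]
  obtain ⟨y, rfl⟩ := exists_quaternionEmbedding_eq hz
  refine isUnit_iff_exists.mpr
    ⟨y, quaternionEmbedding_injective ?_, quaternionEmbedding_injective ?_⟩
  · rw [map_mul, hxz, map_one]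
  · rw [map_mul, hzx, map_one]

theorem conjTranspose_eq_of_quaternionConj_eq_self {x : Matrix (n ⊕ n) (n ⊕ n) ℂ}
    (hx : quaternionConj x = x) : xᴴ = -(J n ℂ * xᵀ * J n ℂ) := by
  have hJ : (J n ℂ)ᴴ = -J n ℂ := by
    rw [conjTranspose, J_transpose]
    simp [Matrix.map_neg]
  have hconj : (x.map conj)ᴴ = xᵀ := by
    ext
    simp
  nth_rw 1 [← hx]
  rw [quaternionConj_apply, conjTranspose_mul, conjTranspose_mul, conjTranspose_neg, hJ, hconj,
    neg_neg, Matrix.mul_neg, Matrix.mul_neg, Matrix.mul_assoc]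

-- On quaternionic matrices `xᴴ = J⁻¹ xᵀ J`, so the bilinear form `T'` yields the sesquilinear form
-- `J T'`; the sign of `ε` flips because `J` is skew.
theorem exists_invariant_quaternionic_form {S : Matrix (n ⊕ n) (n ⊕ n) ℂ} (hS : IsUnit S) {ε : ℤˣ}
    (hε : Sᵀ = ε • S) :
    ∃ T : Matrix n n ℍ[ℝ], IsUnit T ∧ Tᴴ = -ε • T ∧ ∀ y : Matrix n n ℍ[ℝ],
      (quaternionEmbedding y)ᵀ * S * quaternionEmbedding y = S → yᴴ * T * y = T := by
  have hJ : -J n ℂ * J n ℂ = 1 := by rw [Matrix.neg_mul, J_squared, neg_neg]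
  obtain ⟨T', hu, hconj, hT', hpres⟩ :=
    isRealStructure_quaternionConj.exists_invariant_fixed_form hS hε
  have hH : quaternionConj (J n ℂ * T') = J n ℂ * T' := by rw [map_mul, quaternionConj_J, hconj]
  obtain ⟨T, hT⟩ := exists_quaternionEmbedding_eq hH
  refine ⟨T, isUnit_of_isUnit_quaternionEmbedding ?_, quaternionEmbedding_injective ?_,
    fun y hy => quaternionEmbedding_injective ?_⟩
  · rw [hT]
    exact isUnit_J.mul hu
  · rw [quaternionEmbedding_conjTranspose, Units.smul_def, map_zsmul, hT,
      conjTranspose_eq_of_quaternionConj_eq_self hH, transpose_mul, hT', J_transpose,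
      Matrix.mul_assoc, Matrix.mul_assoc, hJ, Matrix.mul_one, Matrix.mul_smul]
    simp [Units.smul_def]
  · have hy' := hpres _ (quaternionConj_quaternionEmbedding y) hy
    rw [map_mul, map_mul, quaternionEmbedding_conjTranspose, hT,
      conjTranspose_eq_of_quaternionConj_eq_self (quaternionConj_quaternionEmbedding y)]
    calc -(J n ℂ * (quaternionEmbedding y)ᵀ * J n ℂ) * (J n ℂ * T') * quaternionEmbedding y
        = J n ℂ * ((quaternionEmbedding y)ᵀ * (-J n ℂ * J n ℂ) * T' * quaternionEmbedding y) := by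
          noncomm_ring
      _ = J n ℂ * T' := by rw [hJ, Matrix.mul_one, hy']

end QuaternionEmbedding

section Scalars

open Quaternion

theorem exists_real_mul_mul_eq_one_or_neg_one {r : ℝ} (hr : r ≠ 0) :
    ∃ c : ℝ, c ≠ 0 ∧ (c * r * c = 1 ∨ c * r * c = -1) := by
  have habs : 0 < |r| := abs_pos.mpr hr
  have hsq : (√|r|)⁻¹ * |r| * (√|r|)⁻¹ = 1 := by
    rw [mul_right_comm, ← mul_inv, Real.mul_self_sqrt habs.le, inv_mul_cancel₀ habs.ne']
  refine ⟨(√|r|)⁻¹, inv_ne_zero (Real.sqrt_pos.mpr habs).ne', ?_⟩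
  rcases abs_choice r with h | h <;> rw [h] at hsq ⊢
  · exact .inl hsq
  · exact .inr (by linear_combination -hsq)

theorem exists_star_mul_mul_eq_one_or_neg_one {a : ℍ[ℝ]} (ha : a ≠ 0)
    (hstar : star a = a) : ∃ c : ℍ[ℝ], c ≠ 0 ∧ (star c * a * c = 1 ∨ star c * a * c = -1) := by
  rw [Quaternion.star_eq_self] at hstar
  have hre : a.re ≠ 0 := fun h => ha (by rw [hstar, h, Quaternion.coe_zero])
  obtain ⟨c, hc, h⟩ := exists_real_mul_mul_eq_one_or_neg_one hre
  refine ⟨c, Quaternion.coe_injective.ne hc, ?_⟩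
  rw [hstar, Quaternion.star_coe, ← Quaternion.coe_mul, ← Quaternion.coe_mul]
  exact h.imp (fun h => by rw [h, Quaternion.coe_one])
    fun h => by rw [h, Quaternion.coe_neg, Quaternion.coe_one]

/-- The quaternion unit `i`. -/
@[simps]
def quaternionI : ℍ[ℝ] := ⟨0, 1, 0, 0⟩

/-- The quaternion unit `j`. -/
@[simps]
def quaternionJ : ℍ[ℝ] := ⟨0, 0, 1, 0⟩

theorem quaternionI_ne_zero : quaternionI ≠ 0 := fun h => by
  simpa using congrArg QuaternionAlgebra.imI h

theorem quaternionJ_mul_self : quaternionJ * quaternionJ = -1 := by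
  ext <;> simp

theorem quaternionJ_mul_quaternionI :
    quaternionJ * quaternionI = -(quaternionI * quaternionJ) := by
  ext <;> simp

-- Both `d` and `‖d‖ j` square to `-‖d‖²`, so `d + ‖d‖ j` intertwines them; it vanishes only if
-- `d = -‖d‖ j`, and then `i` intertwines them.
theorem exists_mul_eq_norm_smul_mul_quaternionJ {d : ℍ[ℝ]} (hd : star d = -d) :
    ∃ c : ℍ[ℝ], c ≠ 0 ∧ d * c = ‖d‖ • (c * quaternionJ) := by
  by_cases hc : d + ‖d‖ • quaternionJ = 0
  · refine ⟨quaternionI, quaternionI_ne_zero, ?_⟩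
    nth_rw 1 [eq_neg_of_add_eq_zero_left hc]
    rw [neg_mul, smul_mul_assoc, quaternionJ_mul_quaternionI, smul_neg, neg_neg]
  · have hdd : d * d = -(‖d‖ ^ 2) • (1 : ℍ[ℝ]) := by
      rw [← neg_neg (d * d), ← neg_mul, ← hd, Quaternion.star_mul_self,
        Quaternion.normSq_eq_norm_mul_self, ← sq, neg_smul, ← Quaternion.coe_mul_eq_smul, mul_one]
    refine ⟨_, hc, ?_⟩
    rw [mul_add, add_mul, hdd, smul_mul_assoc, quaternionJ_mul_self, mul_smul_comm, smul_add,
      smul_smul, smul_neg, neg_smul, ← sq, add_comm]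

theorem exists_star_mul_mul_eq_quaternionJ {d : ℍ[ℝ]} (hd0 : d ≠ 0)
    (hd : star d = -d) : ∃ c : ℍ[ℝ], c ≠ 0 ∧ star c * d * c = quaternionJ := by
  obtain ⟨c, hc, hdc⟩ := exists_mul_eq_norm_smul_mul_quaternionJ hd
  set r := ‖d‖ * Quaternion.normSq c
  have hr0 : 0 < r :=
    mul_pos (norm_pos_iff.mpr hd0) (by rw [Quaternion.normSq_eq_norm_mul_self]; positivity)
  have hcdc : star c * d * c = r • quaternionJ := by
    rw [mul_assoc, hdc, mul_smul_comm, ← mul_assoc, Quaternion.star_mul_self,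
      Quaternion.coe_mul_eq_smul, smul_smul]
  refine ⟨(√r)⁻¹ • c, smul_ne_zero (inv_ne_zero (Real.sqrt_pos.mpr hr0).ne') hc, ?_⟩
  rw [Quaternion.star_smul, smul_mul_assoc, smul_mul_smul_comm, hcdc, smul_smul, ← mul_inv,
    Real.mul_self_sqrt hr0.le, inv_mul_cancel₀ hr0.ne', one_smul]

end Scalars

section BilinearForm

variable {ι A : Type*} [Fintype ι] [CommRing A] {g K : Matrix ι ι A}

theorem transpose_transpose_mul_mul {ε : ℤˣ} (hK : Kᵀ = ε • K) :
    (gᵀ * K * g)ᵀ = ε • (gᵀ * K * g) := by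
  simp only [transpose_mul, transpose_transpose, hK, Matrix.smul_mul, Matrix.mul_smul,
    Matrix.mul_assoc]

variable [DecidableEq ι]

theorem isUnit_transpose_mul_mul (hg : IsUnit g) (hK : IsUnit K) : IsUnit (gᵀ * K * g) :=
  (((isUnit_transpose g).mpr hg).mul hK).mul hg

theorem transpose_mul_mul_eq_of_conj (hg : IsUnit g) {x : Matrix ι ι A}
    (hx : (g * x * g⁻¹)ᵀ * K * (g * x * g⁻¹) = K) : xᵀ * (gᵀ * K * g) * x = gᵀ * K * g := by
  have hinv : g⁻¹ * g = 1 := nonsing_inv_mul g ((isUnit_iff_isUnit_det g).mp hg)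
  have hxg : g * x * g⁻¹ * g = g * x := by rw [Matrix.mul_assoc, hinv, Matrix.mul_one]
  calc xᵀ * (gᵀ * K * g) * x = (g * x * g⁻¹ * g)ᵀ * K * (g * x * g⁻¹ * g) := by
        rw [hxg, transpose_mul]
        simp only [Matrix.mul_assoc]
    _ = gᵀ * ((g * x * g⁻¹)ᵀ * K * (g * x * g⁻¹)) * g := by
        rw [transpose_mul]
        simp only [Matrix.mul_assoc]
    _ = gᵀ * K * g := by rw [hx]

theorem exists_conj_of_starCongruent {R : Type*} [Ring R] [StarRing R] (F : R →+* Matrix ι ι A)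
    (hg : IsUnit g) {T H : R} (hTH : StarCongruent T H)
    (hT : ∀ y, (F y)ᵀ * (gᵀ * K * g) * F y = gᵀ * K * g → star y * T * y = T) :
    ∃ h, IsUnit h ∧ ∀ y, (g * F y * g⁻¹)ᵀ * K * (g * F y * g⁻¹) = K →
      ∃ z, star z * H * z = H ∧ F z = h⁻¹ * F y * h := by
  obtain ⟨p, hp⟩ := hTH.exists_units_conj
  refine ⟨F p, p.isUnit.map F, fun y hy =>
    ⟨_, hp y (hT y (transpose_mul_mul_eq_of_conj hg hy)), ?_⟩⟩
  have hinv : (F p)⁻¹ = F ↑p⁻¹ := by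
    rw [inv_eq_left_inv]
    rw [← map_mul, Units.inv_mul, map_one]
  rw [map_mul, map_mul, hinv]

end BilinearForm

section Membership

open ComplexConjugate Quaternion

theorem isRealMat_iff {ι : Type} [Fintype ι] [DecidableEq ι] {x : Matrix ι ι ℂ} :
    IsRealMat x ↔ ∃ y : Matrix ι ι ℝ, Complex.ofRealHom.mapMatrix y = x := by
  constructor
  · exact fun hx => exists_map_ofReal_eq (Matrix.ext fun i j => Complex.conj_eq_iff_im.mpr (hx i j))
  · rintro ⟨y, rfl⟩ i j
    exact Complex.ofReal_im (y i j)

theorem isQuatMat_iff {m : ℕ} {x : Matrix (Fin m ⊕ Fin m) (Fin m ⊕ Fin m) ℂ} :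
    IsQuatMat m x ↔ ∃ y, quaternionEmbedding y = x := by
  refine Iff.trans quaternionConj_eq_self_iff.symm ⟨exists_quaternionEmbedding_eq, ?_⟩
  rintro ⟨y, rfl⟩
  exact quaternionConj_quaternionEmbedding y

theorem quaternionEmbedding_diagonal_quaternionJ (m : ℕ) :
    quaternionEmbedding (diagonal fun _ => quaternionJ) = Jc m := by
  rw [quaternionEmbedding_apply, Jc]
  congr 1 <;> ext i j <;> obtain rfl | h := eq_or_ne i j <;>
    simp [*, complexPart_apply, jPart_apply, Complex.ext_iff]

theorem quaternionEmbedding_signatureMatrix (m r : ℕ) :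
    quaternionEmbedding (signatureMatrix ℍ[ℝ] m r) = fromBlocks (Ipq m r) 0 0 (Ipq m r) := by
  rw [quaternionEmbedding_apply, signatureMatrix, Ipq]
  congr 1 <;> ext i j <;> obtain rfl | h := eq_or_ne i j <;>
    simp [*, apply_ite complexPart, apply_ite jPart, apply_ite conj, complexPart_one, jPart_one]

theorem ofReal_mapMatrix_signatureMatrix (N p : ℕ) :
    Complex.ofRealHom.mapMatrix (signatureMatrix ℝ N p) = Ipq N p := by
  rw [signatureMatrix, RingHom.mapMatrix_apply, diagonal_map (map_zero _), Ipq]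
  simp [apply_ite]

variable {N m : ℕ}

theorem memOpq_of_mapMatrix {p : ℕ} {z : Matrix (Fin N) (Fin N) ℝ}
    (hz : zᴴ * signatureMatrix ℝ N p * z = signatureMatrix ℝ N p) :
    MemOpq N p (Complex.ofRealHom.mapMatrix z) := by
  refine ⟨isRealMat_iff.mpr ⟨z, rfl⟩, ?_⟩
  have h := congrArg Complex.ofRealHom.mapMatrix hz
  rwa [map_mul, map_mul, ofReal_mapMatrix_signatureMatrix,
    conjTranspose_eq_transpose_of_trivial] at h

theorem memSpR_of_mapMatrix {z : Matrix (Fin m ⊕ Fin m) (Fin m ⊕ Fin m) ℝ}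
    (hz : zᴴ * J (Fin m) ℝ * z = J (Fin m) ℝ) : MemSpR m (Complex.ofRealHom.mapMatrix z) := by
  refine ⟨isRealMat_iff.mpr ⟨z, rfl⟩, ?_⟩
  have h := congrArg Complex.ofRealHom.mapMatrix hz
  rwa [map_mul, map_mul, RingHom.mapMatrix_apply (M := J (Fin m) ℝ), map_J,
    conjTranspose_eq_transpose_of_trivial] at h

theorem memOstar_quaternionEmbedding {z : Matrix (Fin m) (Fin m) ℍ[ℝ]}
    (hz : zᴴ * (diagonal fun _ => quaternionJ) * z = diagonal fun _ => quaternionJ) :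
    MemOstar m (quaternionEmbedding z) := by
  refine ⟨isQuatMat_iff.mpr ⟨z, rfl⟩, ?_⟩
  rw [← quaternionEmbedding_diagonal_quaternionJ, ← quaternionEmbedding_conjTranspose, ← map_mul,
    ← map_mul, hz]

theorem memSpRS_quaternionEmbedding {r : ℕ} {z : Matrix (Fin m) (Fin m) ℍ[ℝ]}
    (hz : zᴴ * signatureMatrix ℍ[ℝ] m r * z = signatureMatrix ℍ[ℝ] m r) :
    MemSpRS m r (quaternionEmbedding z) := by
  refine ⟨isQuatMat_iff.mpr ⟨z, rfl⟩, ?_⟩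
  rw [← quaternionEmbedding_signatureMatrix, ← quaternionEmbedding_conjTranspose, ← map_mul,
    ← map_mul, hz]

end Membership

section Conjugation

open Quaternion

variable {N m : ℕ}

theorem exists_conj_memOpq {g : Matrix (Fin N) (Fin N) ℂ} (hg : IsUnit g) :
    ∃ p q, p + q = N ∧ ∃ h : Matrix (Fin N) (Fin N) ℂ, IsUnit h ∧
      ∀ x, IsRealMat x → MemOC (g * x * g⁻¹) → MemOpq N p (h⁻¹ * x * h) := by
  obtain ⟨T, hu, hT, hpres⟩ := exists_invariant_real_form (isUnit_transpose_mul_mul hg isUnit_one)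
    (transpose_transpose_mul_mul (ε := 1) (by simp))
  rw [one_smul] at hT
  obtain ⟨p, q, hpq, hTp⟩ := exists_starCongruent_signatureMatrix two_ne_zero
    (fun a ha _ => exists_real_mul_mul_eq_one_or_neg_one ha) hT hu
  obtain ⟨h, hh, hconj⟩ := exists_conj_of_starCongruent _ hg hTp hpres
  refine ⟨p, q, hpq, h, hh, fun x hx hgx => ?_⟩
  obtain ⟨y, rfl⟩ := isRealMat_iff.mp hx
  obtain ⟨z, hz, hzy⟩ := hconj y (by rwa [Matrix.mul_one])
  exact hzy ▸ memOpq_of_mapMatrix hz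

theorem exists_conj_memSpR {g : Matrix (Fin m ⊕ Fin m) (Fin m ⊕ Fin m) ℂ} (hg : IsUnit g) :
    ∃ h : Matrix (Fin m ⊕ Fin m) (Fin m ⊕ Fin m) ℂ, IsUnit h ∧
      ∀ x, IsRealMat x → MemSpC m (g * x * g⁻¹) → MemSpR m (h⁻¹ * x * h) := by
  obtain ⟨T, hu, hT, hpres⟩ := exists_invariant_real_form (isUnit_transpose_mul_mul hg isUnit_J)
    (transpose_transpose_mul_mul (ε := -1) (by simp))
  obtain ⟨P, hP, hPT⟩ := exists_isUnit_transpose_mul_mul_eq_J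
    (isAlt_toBilin'_of_transpose_eq_neg (by simpa using hT)) hu
  obtain ⟨h, hh, hconj⟩ := exists_conj_of_starCongruent _ hg ⟨P, hP, hPT⟩ hpres
  refine ⟨h, hh, fun x hx hgx => ?_⟩
  obtain ⟨y, rfl⟩ := isRealMat_iff.mp hx
  obtain ⟨z, hz, hzy⟩ := hconj y hgx
  exact hzy ▸ memSpR_of_mapMatrix hz

theorem exists_conj_memOstar {g : Matrix (Fin m ⊕ Fin m) (Fin m ⊕ Fin m) ℂ} (hg : IsUnit g) :
    ∃ h : Matrix (Fin m ⊕ Fin m) (Fin m ⊕ Fin m) ℂ, IsUnit h ∧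
      ∀ x, IsQuatMat m x → MemOC (g * x * g⁻¹) → MemOstar m (h⁻¹ * x * h) := by
  obtain ⟨T, hu, hT, hpres⟩ :=
    exists_invariant_quaternionic_form (isUnit_transpose_mul_mul hg isUnit_one)
      (transpose_transpose_mul_mul (ε := 1) (by simp))
  have hskew : quaternionJ + (-1 : ℤˣ) • star quaternionJ ≠ 0 := fun h => by
    simpa using congrArg QuaternionAlgebra.imJ h
  obtain ⟨d, hd, hTd⟩ := exists_starCongruent_diagonal_of_normalForm (p := (· = quaternionJ))
    ⟨_, hskew⟩
    (fun a ha hstar => exists_star_mul_mul_eq_quaternionJ ha (by simpa using hstar)) hT hu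
  obtain rfl : d = fun _ => quaternionJ := funext hd
  obtain ⟨h, hh, hconj⟩ := exists_conj_of_starCongruent _ hg hTd hpres
  refine ⟨h, hh, fun x hx hgx => ?_⟩
  obtain ⟨y, rfl⟩ := isQuatMat_iff.mp hx
  obtain ⟨z, hz, hzy⟩ := hconj y (by rwa [Matrix.mul_one])
  exact hzy ▸ memOstar_quaternionEmbedding hz

theorem exists_conj_memSpRS {g : Matrix (Fin m ⊕ Fin m) (Fin m ⊕ Fin m) ℂ} (hg : IsUnit g) :
    ∃ r s, r + s = m ∧ ∃ h : Matrix (Fin m ⊕ Fin m) (Fin m ⊕ Fin m) ℂ, IsUnit h ∧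
      ∀ x, IsQuatMat m x → MemSpC m (g * x * g⁻¹) → MemSpRS m r (h⁻¹ * x * h) := by
  obtain ⟨T, hu, hT, hpres⟩ :=
    exists_invariant_quaternionic_form (isUnit_transpose_mul_mul hg isUnit_J)
      (transpose_transpose_mul_mul (ε := -1) (by simp))
  rw [neg_neg, one_smul] at hT
  have htwo : (2 : ℍ[ℝ]) ≠ 0 := by
    exact_mod_cast Quaternion.coe_injective.ne (two_ne_zero' ℝ)
  obtain ⟨r, s, hrs, hTr⟩ := exists_starCongruent_signatureMatrix htwo
    (fun _ => exists_star_mul_mul_eq_one_or_neg_one) hT hu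
  obtain ⟨h, hh, hconj⟩ := exists_conj_of_starCongruent _ hg hTr hpres
  refine ⟨r, s, hrs, h, hh, fun x hx hgx => ?_⟩
  obtain ⟨y, rfl⟩ := isQuatMat_iff.mp hx
  obtain ⟨z, hz, hzy⟩ := hconj y hgx
  exact hzy ▸ memSpRS_quaternionEmbedding hz

end Conjugation

/-- Conjugation-descent to real forms: any subgroup of `O(N,ℂ)` (resp. `Sp(m,ℂ)`)
consisting, after conjugation by `g`, of real (resp. quaternionic) matrices can be
conjugated into `O(p,q)`, `Sp(m,ℝ)`, `O*(2m)` or `Sp(r,s)` respectively. -/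
theorem conjugate_into_real_forms (N m : ℕ) (hN : 1 ≤ N) (hm : 1 ≤ m) :
    -- (1) real ∩ O(N,ℂ) up to conjugacy lands in O(p,q)
    (∀ g : Matrix (Fin N) (Fin N) ℂ, IsUnit g →
      ∃ p q, p + q = N ∧ ∃ h : Matrix (Fin N) (Fin N) ℂ, IsUnit h ∧
        ∀ x : Matrix (Fin N) (Fin N) ℂ, IsRealMat x → IsUnit x →
          MemOC (g * x * g⁻¹) → MemOpq N p (h⁻¹ * x * h)) ∧
    -- (2) real ∩ Sp(m,ℂ) up to conjugacy lands in Sp(m,ℝ)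
    (∀ g : Matrix (Fin m ⊕ Fin m) (Fin m ⊕ Fin m) ℂ, IsUnit g →
      ∃ h : Matrix (Fin m ⊕ Fin m) (Fin m ⊕ Fin m) ℂ, IsUnit h ∧
        ∀ x : Matrix (Fin m ⊕ Fin m) (Fin m ⊕ Fin m) ℂ, IsRealMat x → IsUnit x →
          MemSpC m (g * x * g⁻¹) → MemSpR m (h⁻¹ * x * h)) ∧
    -- (3) quaternionic ∩ O(2m,ℂ) up to conjugacy lands in O*(2m)
    (∀ g : Matrix (Fin m ⊕ Fin m) (Fin m ⊕ Fin m) ℂ, IsUnit g →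
      ∃ h : Matrix (Fin m ⊕ Fin m) (Fin m ⊕ Fin m) ℂ, IsUnit h ∧
        ∀ x : Matrix (Fin m ⊕ Fin m) (Fin m ⊕ Fin m) ℂ, IsQuatMat m x → IsUnit x →
          MemOC (g * x * g⁻¹) → MemOstar m (h⁻¹ * x * h)) ∧
    -- (4) quaternionic ∩ Sp(m,ℂ) up to conjugacy lands in Sp(r,s)
    (∀ g : Matrix (Fin m ⊕ Fin m) (Fin m ⊕ Fin m) ℂ, IsUnit g →
      ∃ r s, r + s = m ∧ ∃ h : Matrix (Fin m ⊕ Fin m) (Fin m ⊕ Fin m) ℂ, IsUnit h ∧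
        ∀ x : Matrix (Fin m ⊕ Fin m) (Fin m ⊕ Fin m) ℂ, IsQuatMat m x → IsUnit x →
          MemSpC m (g * x * g⁻¹) → MemSpRS m r (h⁻¹ * x * h)) := by
  refine ⟨fun g hg => ?_, fun g hg => ?_, fun g hg => ?_, fun g hg => ?_⟩
  · obtain ⟨p, q, hpq, h, hh, hconj⟩ := exists_conj_memOpq hg
    exact ⟨p, q, hpq, h, hh, fun x hx _ => hconj x hx⟩
  · obtain ⟨h, hh, hconj⟩ := exists_conj_memSpR hg
    exact ⟨h, hh, fun x hx _ => hconj x hx⟩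
  · obtain ⟨h, hh, hconj⟩ := exists_conj_memOstar hg
    exact ⟨h, hh, fun x hx _ => hconj x hx⟩
  · obtain ⟨r, s, hrs, h, hh, hconj⟩ := exists_conj_memSpRS hg
    exact ⟨r, s, hrs, h, hh, fun x hx _ => hconj x hx⟩
end
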